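/- Let G = GP(Γ, 𝒢) be a non-degenerate graph product over a finite simple graph Γ in which every vertex group is infinite. Then G is acylindrically arboreal (admits a non-elementary acylindrical action on a tree) if and only if diam(Γ) ≥ 3. -/

import Mathlib

/-- An action of a group `G` by simplicial isometries (automorphisms) on a simplicial
tree, i.e. a connected acyclic simple graph, with the natural edge metric. -/
structure TreeAction (G : Type*) [Group G] where
  V : Type
  T : SimpleGraph V
  isTree : T.IsTree
  act : G →* (T ≃g T)

namespace TreeAction

variable {G : Type*} [Group G] (A : TreeAction G)

/-- The action fixes a point of the tree (the action is elliptic). -/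
def FixesPoint : Prop := ∃ x : A.V, ∀ g : G, A.act g x = x

/-- An element is elliptic if it fixes a point of the tree. -/
def Elliptic (g : G) : Prop := ∃ x : A.V, A.act g x = x

/-- The action has bounded orbits. -/
def BoundedOrbits : Prop := ∃ (x : A.V) (B : ℕ), ∀ g : G, A.T.dist x (A.act g x) ≤ B

/-- `(k, C)`-acylindricity: the pointwise stabiliser of any geodesic edge path of length
at least `k` (equivalently, in a tree, the common stabiliser of two points at distance
at least `k`) has at most `C` elements. -/
def KCAcylindrical (k C : ℕ) : Prop :=
  ∀ x y : A.V, k ≤ A.T.dist x y →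
    {g : G | A.act g x = x ∧ A.act g y = y}.Finite ∧
      {g : G | A.act g x = x ∧ A.act g y = y}.ncard ≤ C

/-- An action on a tree is acylindrical if it is `(k, C)`-acylindrical for some `k ≥ 0`,
`C ≥ 1`. -/
def Acylindrical : Prop := ∃ k C : ℕ, 1 ≤ C ∧ A.KCAcylindrical k C

/-- Bowditch's definition of acylindricity for the action on the tree. -/
def BowditchAcylindrical : Prop :=
  ∀ ε : ℕ, ∃ R N : ℕ, ∀ x y : A.V, R ≤ A.T.dist x y →
    {g : G | A.T.dist x (A.act g x) ≤ ε ∧ A.T.dist y (A.act g y) ≤ ε}.Finite ∧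
      {g : G | A.T.dist x (A.act g x) ≤ ε ∧ A.T.dist y (A.act g y) ≤ ε}.ncard ≤ N

end TreeAction

/-- A group is virtually cyclic if it has a cyclic subgroup of finite index. -/
def IsVirtuallyCyclic (G : Type*) [Group G] : Prop :=
  ∃ H : Subgroup G, H.FiniteIndex ∧ IsCyclic H

namespace TreeAction

variable {G : Type*} [Group G] (A : TreeAction G)

/-- The action is non-elementary: unbounded orbits and the group is not virtually
cyclic. -/
def NonElementary : Prop := ¬ A.BoundedOrbits ∧ ¬ IsVirtuallyCyclic G

/-- The action fixes a bi-infinite geodesic line setwise. -/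
def FixesLine : Prop :=
  ∃ ℓ : ℤ → A.V, (∀ m n : ℤ, (A.T.dist (ℓ m) (ℓ n) : ℤ) = |m - n|) ∧
    ∀ g : G, (fun v => A.act g v) '' Set.range ℓ = Set.range ℓ

end TreeAction

/-- A group is acylindrically arboreal if it admits a non-elementary acylindrical
action on a simplicial tree. -/
def AcylindricallyArboreal (G : Type*) [Group G] : Prop :=
  ∃ A : TreeAction G, A.Acylindrical ∧ A.NonElementary

/-- Property (FA⁻): every action on a simplicial tree either fixes a point or fixes a
bi-infinite geodesic setwise. -/
def PropertyFAMinus (G : Type*) [Group G] : Prop :=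
  ∀ A : TreeAction G, A.FixesPoint ∨ A.FixesLine

section GraphProduct

variable {V : Type} (Γ : SimpleGraph V) (Gv : V → Type) [∀ v, Group (Gv v)]

/-- The commutation relators defining a graph product: for each edge `{u, v}` of `Γ`,
the elements of `G_u` commute with the elements of `G_v` inside the free product. -/
def graphProductRels : Set (Monoid.CoprodI Gv) :=
  {x | ∃ (u v : V), Γ.Adj u v ∧ ∃ (a : Gv u) (b : Gv v),
    x = Monoid.CoprodI.of a * Monoid.CoprodI.of b *
      (Monoid.CoprodI.of a)⁻¹ * (Monoid.CoprodI.of b)⁻¹}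

/-- The graph product of the groups `Gv` over the finite simple graph `Γ`: the free
product of the vertex groups modulo commutation of adjacent vertex groups. -/
def GraphProduct : Type :=
  Monoid.CoprodI Gv ⧸ Subgroup.normalClosure (graphProductRels Γ Gv)

instance : Group (GraphProduct Γ Gv) :=
  inferInstanceAs (Group (Monoid.CoprodI Gv ⧸ Subgroup.normalClosure (graphProductRels Γ Gv)))

/-- The canonical map of a vertex group into the graph product. -/
def GraphProduct.of (v : V) : Gv v →* GraphProduct Γ Gv :=
  (QuotientGroup.mk' _).comp Monoid.CoprodI.of

/-- The full subgroup on a set `S` of vertices: the subgroup generated by the vertex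
groups of the vertices in `S`. -/
def GraphProduct.full (S : Set V) : Subgroup (GraphProduct Γ Gv) :=
  ⨆ v ∈ S, (GraphProduct.of Γ Gv v).range

/-- A graph product is non-degenerate if all vertex groups are nontrivial and `Γ` has
more than one vertex. -/
def GraphProduct.NonDegenerate : Prop :=
  (∀ v, Nontrivial (Gv v)) ∧ Nontrivial V

/-- The conjugate `g H g⁻¹` of a subgroup. -/
def conjSubgroup {G : Type*} [Group G] (g : G) (H : Subgroup G) : Subgroup G :=
  H.map (MulAut.conj g).toMonoidHom

/-- Edge distance at least `n` between two vertices of a graph (with the convention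
that vertices in different components are at infinite distance). -/
def SimpleGraph.distAtLeast (n : ℕ) (a b : V) : Prop :=
  a ≠ b ∧ (¬ Γ.Reachable a b ∨ n ≤ Γ.dist a b)

/-- Two vertices are separated (w.r.t. the graph product) if their edge distance is at
least 2 and the full subgroup on the intersection of their links is finite. -/
def GraphProduct.SeparatedPair (a b : V) : Prop :=
  a ≠ b ∧ ¬ Γ.Adj a b ∧
    Finite (GraphProduct.full Γ Gv (Γ.neighborSet a ∩ Γ.neighborSet b))

/-- The graph-theoretic diameter of `Γ` is at least `n`. -/
def SimpleGraph.diamAtLeast (n : ℕ) : Prop := ∃ a b : V, Γ.distAtLeast n a b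

end GraphProduct

/-!
Suppose `diam(Γ) ≤ 2` and let `G` act acylindrically, without inversions after subdivision, on a
tree. Each vertex group commutes with another infinite group meeting it trivially. Its elements are
therefore elliptic, since infinitely many commuting elements would shift the axis of a hyperbolic
one, and by Serre's lemma and the Helly property of subtrees it fixes a nonempty subtree, which is
bounded by acylindricity. The fixed subtrees of adjacent vertex groups meet, because each group
preserves that of the other. If `u` and `v` have a common neighbour `w`, then `G_u` and `G_v` lie in
the centraliser of `G_w`, which preserves the bounded fixed subtree of `G_w` and hence fixes one of
its vertices. So all fixed subtrees meet pairwise, and by the Helly property `G` fixes a vertex.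

Conversely, let `a` and `b` be vertices at distance at least three. The graph product embeds in
`N ⋊ G`, where `N` is the free product of two groups `K_a` and `K_b`, each a free product of copies
of `G_a` or `G_b` permuted by `G` like the cosets of the full subgroup on the link. The Bass–Serre
tree of `N = K_a * K_b` carries an action of `N ⋊ G`. An element fixing a long geodesic is conjugate
into `G`, where it fixes nontrivial elements of both `K_a` and `K_b`; hence it is conjugate into the
full subgroups on both links, which are disjoint, and is trivial.
-/

/-! ### Geodesics in trees -/

section Geodesics

variable {X : Type*} {T : SimpleGraph X} {x y z m w : X}

/-- The betweenness relation of the path metric: `m` lies on a geodesic from `x` to `y`. -/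
def GeodesicBtw (T : SimpleGraph X) (x m y : X) : Prop := T.dist x m + T.dist m y = T.dist x y

namespace GeodesicBtw

theorem symm (h : GeodesicBtw T x m y) : GeodesicBtw T y m x := by
  grind [GeodesicBtw, SimpleGraph.dist_comm]

theorem left (T : SimpleGraph X) (x y : X) : GeodesicBtw T x x y := by simp [GeodesicBtw]

theorem right (T : SimpleGraph X) (x y : X) : GeodesicBtw T x y y := by simp [GeodesicBtw]

theorem of_mem_support (hT : T.Connected) {p : T.Walk x y} (hp : p.length = T.dist x y)
    (hm : m ∈ p.support) : GeodesicBtw T x m y := by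
  classical
  have hlength : (p.takeUntil m hm).length + (p.dropUntil m hm).length = p.length := by
    rw [← SimpleGraph.Walk.length_append, SimpleGraph.Walk.take_spec]
  have := T.dist_le (p.takeUntil m hm)
  have := T.dist_le (p.dropUntil m hm)
  have := hT.dist_triangle (u := x) (v := m) (w := y)
  unfold GeodesicBtw
  omega

theorem exists_of_le_dist (hT : T.Connected) {i : ℕ} (hi : i ≤ T.dist x y) :
    ∃ z, GeodesicBtw T x z y ∧ T.dist x z = i := by
  obtain ⟨p, hp⟩ := hT.exists_walk_length_eq_dist x y
  refine ⟨p.getVert i, of_mem_support hT hp (p.getVert_mem_support i), ?_⟩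
  have htake := T.dist_le (p.take i)
  have hdrop := T.dist_le (p.drop i)
  rw [SimpleGraph.Walk.take_length] at htake
  rw [SimpleGraph.Walk.drop_length] at hdrop
  have := hT.dist_triangle (u := x) (v := p.getVert i) (w := y)
  omega

theorem trans_left (hT : T.Connected) (hz : GeodesicBtw T x z w) (hy : GeodesicBtw T x y z) :
    GeodesicBtw T x y w := by
  have := hT.dist_triangle (u := x) (v := y) (w := w)
  have := hT.dist_triangle (u := y) (v := z) (w := w)
  unfold GeodesicBtw at *
  omega

theorem mem_support (hT : T.IsTree) (h : GeodesicBtw T x m y) (p : T.Walk x y) :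
    m ∈ p.support := by
  classical
  obtain ⟨q₁, hq₁⟩ := hT.connected.exists_walk_length_eq_dist x m
  obtain ⟨q₂, hq₂⟩ := hT.connected.exists_walk_length_eq_dist m y
  have hq : (q₁.append q₂).IsPath := by
    apply SimpleGraph.Walk.isPath_of_length_eq_dist
    rw [SimpleGraph.Walk.length_append, hq₁, hq₂, h]
  apply p.support_bypass_subset_support
  rw [← (hT.existsUnique_path x y).unique hq p.bypass_isPath]
  simp

theorem finite_setOf (hT : T.IsTree) (x y : X) : {z | GeodesicBtw T x z y}.Finite := by
  obtain ⟨p, -⟩ := hT.connected.exists_walk_length_eq_dist x y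
  exact p.support.finite_toSet.subset fun z hz => hz.mem_support hT p

theorem or_of_isTree (hT : T.IsTree) (h : GeodesicBtw T y m z) (w : X) :
    GeodesicBtw T w m y ∨ GeodesicBtw T w m z := by
  obtain ⟨p, hp⟩ := hT.connected.exists_walk_length_eq_dist y w
  obtain ⟨q, hq⟩ := hT.connected.exists_walk_length_eq_dist w z
  have hm := h.mem_support hT (p.append q)
  rw [SimpleGraph.Walk.mem_support_append_iff] at hm
  exact hm.imp (fun hm => (of_mem_support hT.connected hp hm).symm)
    (of_mem_support hT.connected hq)

theorem of_dist_le (hT : T.IsTree) (hz : GeodesicBtw T x z y) (hw : GeodesicBtw T x w y)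
    (hle : T.dist x w ≤ T.dist x z) : GeodesicBtw T x w z := by
  have := T.dist_comm (u := w) (v := x)
  have := T.dist_comm (u := w) (v := z)
  rcases hz.or_of_isTree hT w with h | h <;> unfold GeodesicBtw at * <;>
    have := T.dist_comm (u := z) (v := x) <;> omega

theorem eq_of_dist_eq (hT : T.IsTree) (hz : GeodesicBtw T x z y) (hw : GeodesicBtw T x w y)
    (heq : T.dist x w = T.dist x z) : w = z := by
  have h : T.dist x w + T.dist w z = T.dist x z := hz.of_dist_le hT hw heq.le
  exact hT.connected.dist_eq_zero_iff.1 (by omega)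

theorem trans_of_ne (hT : T.IsTree) (hy : GeodesicBtw T x y z) (hz : GeodesicBtw T y z w)
    (hne : y ≠ z) : GeodesicBtw T x z w := by
  refine (hz.or_of_isTree hT x).resolve_left fun h => ?_
  have := hT.connected.pos_dist_of_ne hne
  have := T.dist_comm (u := z) (v := y)
  unfold GeodesicBtw at *
  omega

theorem exists_succ_of_sequence (hT : T.IsTree) (f : ℕ → X) {n : ℕ} (hn : 0 < n)
    (h : GeodesicBtw T (f 0) y (f n)) : ∃ i < n, GeodesicBtw T (f i) y (f (i + 1)) := by
  induction n, hn using Nat.le_induction with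
  | base => exact ⟨0, by simp, h⟩
  | succ n _ ih =>
    rcases h.or_of_isTree hT (f n) with h | h
    · obtain ⟨i, hi, hy⟩ := ih h.symm
      exact ⟨i, by omega, hy⟩
    · exact ⟨n, by omega, h⟩

end GeodesicBtw

/-- Closure under geodesics. In a tree the nonempty geodesically convex sets are the vertex sets
of subtrees. -/
def GeodesicallyConvex (T : SimpleGraph X) (s : Set X) : Prop :=
  ∀ ⦃x⦄, x ∈ s → ∀ ⦃y⦄, y ∈ s → ∀ ⦃z⦄, GeodesicBtw T x z y → z ∈ s

namespace GeodesicallyConvex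

theorem setOf_geodesicBtw (hT : T.IsTree) (x y : X) :
    GeodesicallyConvex T {z | GeodesicBtw T x z y} := by
  intro a ha b hb c hc
  wlog hle : T.dist x a ≤ T.dist x b generalizing a b
  · exact this hb ha hc.symm (by omega)
  have hab : GeodesicBtw T x a b := hb.of_dist_le hT ha hle
  exact hb.trans_left hT.connected (hab.symm.trans_left hT.connected hc.symm).symm

theorem exists_gate (hT : T.IsTree) {s : Set X} (hs : GeodesicallyConvex T s) (hne : s.Nonempty)
    (p : X) : ∃ m ∈ s, ∀ q ∈ s, GeodesicBtw T p m q := by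
  let m := Function.argminOn (T.dist p) s hne
  have hm : m ∈ s := Function.argminOn_mem (T.dist p) s hne
  refine ⟨m, hm, fun q hq => ?_⟩
  by_cases hmq : m = q
  · exact hmq ▸ GeodesicBtw.right T p m
  obtain ⟨u, huq, hmu⟩ :=
    GeodesicBtw.exists_of_le_dist hT.connected (hT.connected.pos_dist_of_ne hmq)
  have hmin : T.dist p m ≤ T.dist p u := Function.argminOn_le (T.dist p) s (hs hm hq huq)
  have hadj : T.Adj m u := SimpleGraph.dist_eq_one_iff_adj.1 hmu
  have hpu : GeodesicBtw T p m u := by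
    have := hT.dist_eq_dist_add_one_of_adj p hadj
    unfold GeodesicBtw
    omega
  exact (hpu.trans_of_ne hT huq hadj.ne).trans_left hT.connected hpu

/-- The gate of `p` in the member farthest from `p` lies in every other member. -/
theorem nonempty_iInter (hT : T.IsTree) {ι : Type*} {s : ι → Set X}
    (hs : ∀ i, GeodesicallyConvex T (s i)) (hinter : ∀ i j, (s i ∩ s j).Nonempty)
    {p : X} {B : ℕ} (hB : ∀ i, ∃ x ∈ s i, T.dist p x ≤ B) : (⋂ i, s i).Nonempty := by
  rcases isEmpty_or_nonempty ι with _ | _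
  · exact ⟨p, by simp⟩
  choose m hm hgate using fun i => (hs i).exists_gate hT ((hB i).imp fun _ h => h.1) p
  have hmB : ∀ i, T.dist p (m i) ≤ B := fun i => by
    obtain ⟨x, hx, hxB⟩ := hB i
    have := hgate i x hx
    unfold GeodesicBtw at this
    omega
  let i := Function.argmin fun i => B - T.dist p (m i)
  refine ⟨m i, Set.mem_iInter.2 fun j => ?_⟩
  obtain ⟨q, hqi, hqj⟩ := hinter i j
  have hle : T.dist p (m j) ≤ T.dist p (m i) := by
    have : B - T.dist p (m i) ≤ B - T.dist p (m j) :=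
      Function.argmin_le (fun i => B - T.dist p (m i)) j
    have := hmB i
    have := hmB j
    omega
  refine hs j (hm j) hqj ?_
  have := (hgate i q hqi).of_dist_le hT (hgate j q hqj) hle
  have := hgate i q hqi
  have := hgate j q hqj
  unfold GeodesicBtw at *
  omega

end GeodesicallyConvex

theorem GeodesicBtw.exists_median (hT : T.IsTree) (x y z : X) :
    ∃ m, GeodesicBtw T x m y ∧ GeodesicBtw T y m z ∧ GeodesicBtw T x m z := by
  obtain ⟨m, hm, hgate⟩ := (GeodesicallyConvex.setOf_geodesicBtw hT x y).exists_gate hT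
    ⟨x, GeodesicBtw.left T x y⟩ z
  exact ⟨m, hm, (hgate y (GeodesicBtw.right T x y)).symm, (hgate x (GeodesicBtw.left T x y)).symm⟩

/-- At a vertex of a cycle where `r` is maximal, the two neighbours on the cycle coincide. -/
theorem isTree_of_rank (hT : T.Connected) (r : X → ℕ)
    (hr : ∀ v u u', T.Adj v u → T.Adj v u' → r u ≤ r v → r u' ≤ r v → u = u') : T.IsTree := by
  classical
  refine ⟨hT, fun v c hc => ?_⟩
  obtain ⟨w, hw, hmax⟩ := Finset.exists_max_image c.support.toFinset r ⟨v, by simp⟩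
  rw [List.mem_toFinset] at hw
  have hle : ∀ u ∈ (c.rotate w hw).support, r u ≤ r w := fun u hu =>
    hmax u (by simpa [SimpleGraph.Walk.mem_support_rotate_iff] using hu)
  have hrot : (c.rotate w hw).IsCycle := hc.rotate hw
  exact hrot.snd_ne_penultimate <| hr w _ _ (SimpleGraph.Walk.adj_snd hrot.not_nil)
    (SimpleGraph.Walk.adj_penultimate hrot.not_nil).symm
    (hle _ (SimpleGraph.Walk.getVert_mem_support _ _))
    (hle _ (SimpleGraph.Walk.getVert_mem_support _ _))

theorem graphDist_map_le {Y : Type*} {S : SimpleGraph Y} (hT : T.Connected) (hS : S.Connected)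
    (f : X → Y) (c : ℕ) (hf : ∀ x y, T.Adj x y → S.dist (f x) (f y) ≤ c) (x y : X) :
    S.dist (f x) (f y) ≤ c * T.dist x y := by
  obtain ⟨p, hp⟩ := hT.exists_walk_length_eq_dist x y
  rw [← hp]
  clear hp
  induction p with
  | nil => simp
  | @cons u v w hadj p ih =>
    have := hf _ _ hadj
    have := hS.dist_triangle (u := f u) (v := f v) (w := f w)
    rw [SimpleGraph.Walk.length_cons, Nat.mul_add]
    omega

end Geodesics

/-! ### Group actions on trees -/

namespace TreeAction

variable {G : Type*} [Group G] {A : TreeAction G}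

instance (A : TreeAction G) : MulAction G A.V where
  smul g x := A.act g x
  one_smul x := by change A.act 1 x = x; simp
  mul_smul g h x := by change A.act (g * h) x = A.act g (A.act h x); simp

theorem act_eq_smul (g : G) (x : A.V) : A.act g x = g • x := rfl

theorem adj_smul {x y : A.V} (g : G) (h : A.T.Adj x y) : A.T.Adj (g • x) (g • y) :=
  (A.act g).map_rel_iff.2 h

@[simp]
theorem dist_smul (g : G) (x y : A.V) : A.T.dist (g • x) (g • y) = A.T.dist x y := by
  have hle (g : G) (x y : A.V) : A.T.dist (g • x) (g • y) ≤ A.T.dist x y := by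
    simpa using graphDist_map_le A.isTree.connected A.isTree.connected (g • · : A.V → A.V) 1
      (fun x y hxy => (SimpleGraph.dist_eq_one_iff_adj.2 (adj_smul g hxy)).le) x y
  exact (hle g x y).antisymm (by simpa using hle g⁻¹ (g • x) (g • y))

theorem smul_geodesicBtw {x y z : A.V} (g : G) (h : GeodesicBtw A.T x y z) :
    GeodesicBtw A.T (g • x) (g • y) (g • z) := by
  simpa [GeodesicBtw] using h

/-- The vertices fixed by every element of `S`. -/
def fixedPoints (A : TreeAction G) (S : Set G) : Set A.V := {x | ∀ g ∈ S, g • x = x}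

/-- No element flips an edge. -/
def NoInversions (A : TreeAction G) : Prop := ∀ (g : G) (x : A.V), ¬ A.T.Adj x (g • x)

/-- The vertices of minimal displacement under `g`: the translation axis of `g` if `g` is not
elliptic and the action has no inversions. -/
def axis (A : TreeAction G) (g : G) : Set A.V :=
  {x | ∀ y : A.V, A.T.dist x (g • x) ≤ A.T.dist y (g • y)}

theorem smul_eq_of_geodesicBtw {g : G} {x y z : A.V} (hx : g • x = x) (hy : g • y = y)
    (h : GeodesicBtw A.T x z y) : g • z = z := by
  have hg := smul_geodesicBtw g h
  have hdist := dist_smul g x z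
  rw [hx, hy] at hg
  rw [hx] at hdist
  exact h.eq_of_dist_eq A.isTree hg hdist

theorem geodesicallyConvex_fixedPoints (S : Set G) :
    GeodesicallyConvex A.T (A.fixedPoints S) :=
  fun _ hx _ hy _ hz g hg => smul_eq_of_geodesicBtw (hx g hg) (hy g hg) hz

theorem smul_mem_fixedPoints {S : Set G} {g : G} (hg : g ∈ Subgroup.centralizer S) {x : A.V}
    (hx : x ∈ A.fixedPoints S) : g • x ∈ A.fixedPoints S := fun s hs => by
  rw [smul_smul, Subgroup.mem_centralizer_iff.1 hg s hs, mul_smul, hx s hs]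

theorem fixedPoints_anti {S S' : Set G} (h : S ⊆ S') : A.fixedPoints S' ⊆ A.fixedPoints S :=
  fun _ hx g hg => hx g (h hg)

/-- The centres of the orbit of `x` form an invariant set of diameter at most one. -/
theorem fixedPoints_nonempty_of_bounded (hA : A.NoInversions) {K : Subgroup G} {x : A.V} {B : ℕ}
    (hB : ∀ k ∈ K, A.T.dist (k • x) x ≤ B) : (A.fixedPoints (K : Set G)).Nonempty := by
  classical
  let IsCentre (n : ℕ) (y : A.V) : Prop := ∀ k ∈ K, A.T.dist (k • x) y ≤ n
  have hex : ∃ n y, IsCentre n y := ⟨B, x, hB⟩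
  obtain ⟨y, hy⟩ := Nat.find_spec hex
  refine ⟨y, fun g hg => ?_⟩
  have hgy : IsCentre (Nat.find hex) (g • y) := fun k hk => by
    simpa [smul_smul, ← dist_smul g⁻¹ (k • x)] using hy _ (K.mul_mem (K.inv_mem hg) hk)
  by_contra hne
  obtain ⟨z, hz, hyz⟩ := GeodesicBtw.exists_of_le_dist A.isTree.connected
    (A.isTree.connected.pos_dist_of_ne (Ne.symm hne))
  have hdist : A.T.dist y (g • y) ≠ 1 := fun h => hA g y (SimpleGraph.dist_eq_one_iff_adj.1 h)
  have hlt : ∀ k ∈ K, A.T.dist (k • x) z < Nat.find hex := fun k hk => by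
    have := hy k hk
    have := hgy k hk
    have := A.T.dist_comm (u := z) (v := y)
    rcases hz.or_of_isTree A.isTree (k • x) with h | h <;> unfold GeodesicBtw at h hz <;> omega
  have hpos := hlt 1 K.one_mem
  exact Nat.find_min hex (Nat.sub_lt (by omega) one_pos)
    ⟨z, fun k hk => Nat.le_pred_of_lt (hlt k hk)⟩

theorem fixedPoints_centralizer_nonempty (hA : A.NoInversions) {S : Set G} {B : ℕ}
    (hne : (A.fixedPoints S).Nonempty)
    (hB : ∀ x ∈ A.fixedPoints S, ∀ y ∈ A.fixedPoints S, A.T.dist x y ≤ B) :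
    (A.fixedPoints (Subgroup.centralizer S : Set G)).Nonempty := by
  obtain ⟨x, hx⟩ := hne
  exact fixedPoints_nonempty_of_bounded hA fun g hg => hB _ (smul_mem_fixedPoints hg hx) x hx

theorem exists_mem_fixedPoints_of_invariant {K : Set G} (hK : (A.fixedPoints K).Nonempty)
    {s : Set A.V} (hs : GeodesicallyConvex A.T s) (hne : s.Nonempty)
    (hinv : ∀ k ∈ K, ∀ x ∈ s, k • x ∈ s) : (s ∩ A.fixedPoints K).Nonempty := by
  obtain ⟨p, hp⟩ := hK
  obtain ⟨m, hm, hgate⟩ := hs.exists_gate A.isTree hne p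
  refine ⟨m, hm, fun k hk => ?_⟩
  have hbtw := hgate _ (hinv k hk m hm)
  have hdist := dist_smul k p m
  rw [hp k hk] at hdist
  unfold GeodesicBtw at hbtw
  exact (A.isTree.connected.dist_eq_zero_iff.1 (by omega)).symm

theorem Elliptic.inv {g : G} (hg : A.Elliptic g) : A.Elliptic g⁻¹ :=
  hg.imp fun x hx => by rw [act_eq_smul, inv_smul_eq_iff, ← act_eq_smul, hx]

theorem Elliptic.exists_midpoint {g : G} (hg : A.Elliptic g) (z : A.V) :
    ∃ m : A.V, g • m = m ∧ GeodesicBtw A.T z m (g • z) ∧ A.T.dist z m = A.T.dist m (g • z) := by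
  obtain ⟨x, hx : g • x = x⟩ := hg
  obtain ⟨m, hxz, hzz, hxgz⟩ := GeodesicBtw.exists_median A.isTree x z (g • z)
  have hgm : g • m = m := by
    have hbtw := smul_geodesicBtw g hxz
    have hdist := dist_smul g x m
    rw [hx] at hbtw hdist
    exact hxgz.eq_of_dist_eq A.isTree hbtw hdist
  refine ⟨m, hgm, hzz, ?_⟩
  conv_rhs => rw [← hgm, dist_smul, A.T.dist_comm]

theorem Elliptic.exists_common_fixedPoint {g h : G} (hg : A.Elliptic g) (hh : A.Elliptic h)
    (hgh : A.Elliptic (g * h)) : ∃ x : A.V, g • x = x ∧ h • x = x := by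
  obtain ⟨z, hz : (g * h) • z = z⟩ := hgh
  have hhz : h • z = g⁻¹ • z := by rw [eq_inv_smul_iff, smul_smul, hz]
  obtain ⟨m, hhm, hm, hmid⟩ := hh.exists_midpoint z
  obtain ⟨n, hgn, hn, hnid⟩ := hg.inv.exists_midpoint z
  rw [← hhz] at hn hnid
  have hmn : n = m := hm.eq_of_dist_eq A.isTree hn (by unfold GeodesicBtw at hm hn; omega)
  exact ⟨m, by rwa [hmn, inv_smul_eq_iff, eq_comm] at hgn, hhm⟩

theorem axis_nonempty (A : TreeAction G) (g : G) : (A.axis g).Nonempty :=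
  have := A.isTree.connected.nonempty
  ⟨_, fun y => Function.argmin_le (fun x : A.V => A.T.dist x (g • x)) y⟩

theorem smul_mem_axis {g h : G} (hgh : Commute g h) {x : A.V} (hx : x ∈ A.axis g) :
    h • x ∈ A.axis g := fun y => by
  rw [smul_smul, hgh.eq, mul_smul, dist_smul]
  exact hx y

theorem smul_ne_of_not_elliptic {g : G} (hg : ¬ A.Elliptic g) (x : A.V) : g • x ≠ x :=
  fun h => hg ⟨x, h⟩

/-- If the geodesics from `g • x` to `x` and to `g • g • x` started with a common edge, its far
end would be displaced less than `x`. -/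
theorem geodesicBtw_of_mem_axis (hA : A.NoInversions) {g : G} (hg : ¬ A.Elliptic g) {x : A.V}
    (hx : x ∈ A.axis g) : GeodesicBtw A.T x (g • x) (g • g • x) := by
  obtain ⟨m, hmx, hmgg, hm⟩ := GeodesicBtw.exists_median A.isTree x (g • x) (g • g • x)
  by_cases hne : g • x = m
  · rwa [hne] at hm ⊢
  obtain ⟨z, hz, hdist⟩ := GeodesicBtw.exists_of_le_dist A.isTree.connected
    (A.isTree.connected.pos_dist_of_ne hne)
  have hzx : GeodesicBtw A.T x z (g • x) := (hmx.symm.trans_left A.isTree.connected hz).symm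
  have hginv : GeodesicBtw A.T x (g⁻¹ • z) (g • x) := by
    simpa using smul_geodesicBtw g⁻¹ (hmgg.trans_left A.isTree.connected hz)
  have hdist' : A.T.dist x (g⁻¹ • z) = 1 := by
    rw [← dist_smul g, smul_inv_smul, hdist]
  have hpos := A.isTree.connected.pos_dist_of_ne (smul_ne_of_not_elliptic hg x).symm
  have hone : A.T.dist x (g • x) ≠ 1 := fun h => hA g x (SimpleGraph.dist_eq_one_iff_adj.1 h)
  have := A.T.dist_comm (u := z) (v := g • x)
  have hle := hzx.of_dist_le A.isTree hginv (by unfold GeodesicBtw at hzx; omega)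
  have hmin := hx (g⁻¹ • z)
  rw [smul_inv_smul] at hmin
  unfold GeodesicBtw at hle hzx
  omega

theorem dist_pow_smul_of_mem_axis (hA : A.NoInversions) {g : G} (hg : ¬ A.Elliptic g) {x : A.V}
    (hx : x ∈ A.axis g) (n : ℕ) : A.T.dist x (g ^ n • x) = n * A.T.dist x (g • x) := by
  have hbtw (n : ℕ) : GeodesicBtw A.T x (g ^ n • x) (g ^ (n + 1) • x) := by
    induction n with
    | zero => simpa using GeodesicBtw.left A.T x (g • x)
    | succ n ih =>
      have hstep := smul_geodesicBtw (g ^ n) (geodesicBtw_of_mem_axis hA hg hx)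
      simp only [smul_smul, ← pow_succ, ← mul_assoc] at hstep
      refine ih.trans_of_ne A.isTree hstep fun h => smul_ne_of_not_elliptic hg x ?_
      rw [pow_succ, mul_smul] at h
      exact (MulAction.injective _ h).symm
  induction n with
  | zero => simp
  | succ n ih =>
    rw [← hbtw n, ih, pow_succ, mul_smul, dist_smul]
    ring

theorem geodesicBtw_pow_smul (hA : A.NoInversions) {g : G} (hg : ¬ A.Elliptic g) {x y : A.V}
    (hy : y ∈ A.axis g) {n : ℕ} (hn : A.T.dist x y < n) :
    GeodesicBtw A.T ((g ^ n)⁻¹ • x) y (g ^ n • x) := by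
  have hpow := dist_pow_smul_of_mem_axis hA hg hy
  have hpos := A.isTree.connected.pos_dist_of_ne (smul_ne_of_not_elliptic hg y).symm
  have hlt : A.T.dist x y < A.T.dist y (g ^ n • y) :=
    hn.trans_le (by rw [hpow]; exact Nat.le_mul_of_pos_right n hpos)
  have hinv : A.T.dist y ((g ^ n)⁻¹ • y) = A.T.dist y (g ^ n • y) := by
    rw [← dist_smul (g ^ n), smul_inv_smul, A.T.dist_comm]
  have hbtw : GeodesicBtw A.T ((g ^ n)⁻¹ • y) y (g ^ n • y) := by
    rw [GeodesicBtw, A.T.dist_comm, hinv, ← dist_smul (g ^ n) ((g ^ n)⁻¹ • y), smul_inv_smul,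
      smul_smul, ← pow_add, hpow, hpow]
    ring
  have hfar {h : G} (hh : A.T.dist x y < A.T.dist y (h • y)) :
      ¬ GeodesicBtw A.T (h • x) y (h • y) := fun hb => by
    rw [GeodesicBtw, dist_smul] at hb
    omega
  have hright := (hbtw.or_of_isTree A.isTree (g ^ n • x)).resolve_right (hfar hlt)
  exact (hright.symm.or_of_isTree A.isTree _).resolve_left (hfar (hinv ▸ hlt))

theorem exists_zpow_smul_geodesicBtw (hA : A.NoInversions) {g : G} (hg : ¬ A.Elliptic g)
    {y : A.V} (hy : y ∈ A.axis g) (x : A.V) :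
    ∃ j : ℤ, GeodesicBtw A.T x (g ^ j • y) (g • x) := by
  set n := A.T.dist x y + 1
  have hbtw := geodesicBtw_pow_smul hA hg (x := x) hy (Nat.lt_succ_self _)
  obtain ⟨i, -, hi⟩ := GeodesicBtw.exists_succ_of_sequence A.isTree
    (fun i : ℕ => g ^ (i - n : ℤ) • x) (n := 2 * n) (by omega)
    (by simpa [two_mul, zpow_neg] using hbtw)
  refine ⟨-(i - n : ℤ), ?_⟩
  have hmove := smul_geodesicBtw (g ^ (-(i - n : ℤ))) hi
  rwa [smul_smul, smul_smul, ← zpow_add, ← zpow_add, neg_add_cancel, zpow_zero, one_smul,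
    show -(i - n : ℤ) + ((i + 1 : ℕ) - n) = 1 by push_cast; ring, zpow_one] at hmove

theorem KCAcylindrical.finite_setOf_smul_eq {k C : ℕ} (hA : A.KCAcylindrical k C) {x y : A.V}
    (hxy : k ≤ A.T.dist x y) (z w : A.V) : {g : G | g • x = z ∧ g • y = w}.Finite := by
  rcases {g : G | g • x = z ∧ g • y = w}.eq_empty_or_nonempty with hempty | ⟨g, rfl, rfl⟩
  · exact hempty ▸ Set.finite_empty
  refine ((hA x y hxy).1.image (g * ·)).subset fun h hh => ⟨g⁻¹ * h, ⟨?_, ?_⟩, by simp⟩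
  · rw [act_eq_smul, mul_smul, hh.1, inv_smul_smul]
  · rw [act_eq_smul, mul_smul, hh.2, inv_smul_smul]

/-- Otherwise every `l ∈ L` moves the axis of `g` along itself, so that some `g ^ j * l` carries a
base vertex `x` of the axis into `[x, g • x]`; acylindricity leaves finitely many such products. -/
theorem KCAcylindrical.elliptic_of_commute {k C : ℕ} (hA : A.KCAcylindrical k C)
    (hinv : A.NoInversions) {g : G} {L : Subgroup G} [Infinite L] (hcomm : ∀ l ∈ L, Commute g l)
    (hdisj : Disjoint (Subgroup.zpowers g) L) : A.Elliptic g := by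
  by_contra hg
  obtain ⟨x, hx⟩ := A.axis_nonempty g
  choose j hj using fun l : L =>
    exists_zpow_smul_geodesicBtw hinv hg (smul_mem_axis (hcomm l l.2) hx) x
  have hfar : k ≤ A.T.dist x (g ^ k • x) := by
    rw [dist_pow_smul_of_mem_axis hinv hg hx]
    exact Nat.le_mul_of_pos_right k
      (A.isTree.connected.pos_dist_of_ne (smul_ne_of_not_elliptic hg x).symm)
  let f (l : L) : G := g ^ j l * l
  have hrange : Set.range f ⊆ ⋃ z ∈ {z | GeodesicBtw A.T x z (g • x)},
      {h : G | h • x = z ∧ h • g ^ k • x = g ^ k • z} := by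
    rintro _ ⟨l, rfl⟩
    have hf : Commute (f l) (g ^ k) :=
      (((Commute.refl g).zpow_right _).mul_right (hcomm l l.2)).symm.pow_right k
    refine Set.mem_biUnion (x := f l • x) ?_ ⟨rfl, ?_⟩
    · simpa only [Set.mem_ofPred_eq, f, mul_smul] using hj l
    · rw [smul_smul, hf.eq, mul_smul]
  have hinj : Function.Injective f := fun l l' h => by
    have hmem : (l : G) * (l' : G)⁻¹ ∈ Subgroup.zpowers g := ⟨-j l + j l', by
      change g ^ (-j l + j l') = _
      rw [zpow_add, zpow_neg, inv_mul_eq_iff_eq_mul, ← mul_assoc]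
      exact eq_mul_inv_of_mul_eq h.symm⟩
    exact Subtype.ext (mul_inv_eq_one.1
      (Subgroup.disjoint_def.1 hdisj hmem (L.mul_mem l.2 (L.inv_mem l'.2))))
  exact (Set.infinite_range_of_injective hinj) <| ((GeodesicBtw.finite_setOf A.isTree x _).biUnion
    fun z _ => hA.finite_setOf_smul_eq hfar z _).subset hrange

theorem KCAcylindrical.dist_lt_of_mem_fixedPoints {k C : ℕ} (hA : A.KCAcylindrical k C) {S : Set G}
    (hS : C < S.encard) {x y : A.V} (hx : x ∈ A.fixedPoints S) (hy : y ∈ A.fixedPoints S) :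
    A.T.dist x y < k := by
  by_contra! hle
  obtain ⟨hfin, hcard⟩ := hA x y hle
  have hsub : S ⊆ {g : G | A.act g x = x ∧ A.act g y = y} := fun g hg => ⟨hx g hg, hy g hg⟩
  have hle := Set.encard_le_encard hsub
  rw [← hfin.cast_ncard_eq] at hle
  exact (hS.trans_le hle).not_ge (by exact_mod_cast hcard)

/-- By Serre's lemma and Helly's theorem, `C + 1` elements of `K` have a common fixed vertex; their
fixed vertices form a bounded set, which is preserved by `L`. -/
theorem KCAcylindrical.fixedPoints_nonempty_of_commute {k C : ℕ} (hA : A.KCAcylindrical k C)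
    (hinv : A.NoInversions) {K L : Subgroup G} [Infinite K] [Infinite L]
    (hcomm : L ≤ Subgroup.centralizer K) (hdisj : Disjoint K L) :
    (A.fixedPoints (L : Set G)).Nonempty := by
  have hell : ∀ g ∈ K, A.Elliptic g := fun g hg => hA.elliptic_of_commute hinv
    (fun l hl => Subgroup.mem_centralizer_iff.1 (hcomm hl) g hg)
    (hdisj.mono_left (by simpa using hg))
  obtain ⟨F, hFK, hF⟩ := (Set.infinite_coe_iff.1 ‹Infinite K›).exists_subset_card_eq (C + 1)
  obtain ⟨x₀⟩ := A.isTree.connected.nonempty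
  choose p hp using fun g : F => hell g (hFK g.2)
  have hne : (A.fixedPoints (F : Set G)).Nonempty := by
    refine (GeodesicallyConvex.nonempty_iInter A.isTree (s := fun g : F => A.fixedPoints {(g : G)})
      (fun g => geodesicallyConvex_fixedPoints _) (fun g h => ?_) (p := x₀)
      (B := Finset.univ.sup fun g => A.T.dist x₀ (p g))
      fun g => ⟨p g, ?_, ?_⟩).mono fun x hx g hg => ?_
    · obtain ⟨x, hgx, hhx⟩ := (hell g (hFK g.2)).exists_common_fixedPoint (hell h (hFK h.2))
        (hell _ (K.mul_mem (hFK g.2) (hFK h.2)))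
      exact ⟨x, by simpa [fixedPoints] using hgx, by simpa [fixedPoints] using hhx⟩
    · rintro _ rfl
      exact hp g
    · exact Finset.le_sup (f := fun g => A.T.dist x₀ (p g)) (Finset.mem_univ g)
    · exact Set.mem_iInter.1 hx ⟨g, hg⟩ g rfl
  refine (fixedPoints_centralizer_nonempty hinv hne (B := k) fun x hx y hy =>
    (hA.dist_lt_of_mem_fixedPoints ?_ hx hy).le).mono
      (fixedPoints_anti (hcomm.trans (Subgroup.centralizer_le hFK)))
  rw [Set.encard_coe_eq_coe_finsetCard, hF]
  exact_mod_cast Nat.lt_succ_self C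

/-- Each `K v` has a bounded nonempty set of fixed vertices, and any two of these sets meet: for
adjacent `u`, `v` because `K v` preserves that of `K u`, and for `u`, `v` with a common neighbour
`w` because both groups preserve that of `K w`. -/
theorem KCAcylindrical.exists_fixed_of_commuting_family {k C : ℕ} (hA : A.KCAcylindrical k C)
    (hinv : A.NoInversions) {ι : Type*} [Nontrivial ι] (Γ : SimpleGraph ι)
    (hΓ : ∀ u v, u ≠ v → Γ.Adj u v ∨ ∃ w, Γ.Adj u w ∧ Γ.Adj w v)
    (K : ι → Subgroup G) [∀ v, Infinite (K v)]
    (hcomm : ∀ u v, Γ.Adj u v → K u ≤ Subgroup.centralizer (K v))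
    (hdisj : ∀ u v, Γ.Adj u v → Disjoint (K u) (K v)) :
    ∃ x : A.V, ∀ v, ∀ g ∈ K v, g • x = x := by
  have hcard (v : ι) : C < (K v : Set G).encard := by
    have hinf : (K v : Set G).Infinite := Set.infinite_coe_iff.1 (inferInstanceAs (Infinite (K v)))
    simp [hinf.encard_eq]
  have hdist (v : ι) {x y : A.V} (hx : x ∈ A.fixedPoints (K v : Set G))
      (hy : y ∈ A.fixedPoints (K v : Set G)) : A.T.dist x y ≤ k :=
    (hA.dist_lt_of_mem_fixedPoints (hcard v) hx hy).le
  have hne (v : ι) : (A.fixedPoints (K v : Set G)).Nonempty := by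
    obtain ⟨u, huv⟩ : ∃ u, Γ.Adj u v := by
      obtain ⟨u, hne⟩ := exists_ne v
      rcases hΓ u v hne with h | ⟨w, -, h⟩
      exacts [⟨u, h⟩, ⟨w, h⟩]
    exact hA.fixedPoints_nonempty_of_commute hinv (hcomm v u huv.symm) (hdisj u v huv)
  have hmeet (u v : ι) : (A.fixedPoints (K u : Set G) ∩ A.fixedPoints (K v)).Nonempty := by
    rcases eq_or_ne u v with rfl | huv
    · simpa using hne u
    rcases hΓ u v huv with h | ⟨w, huw, hwv⟩
    · exact exists_mem_fixedPoints_of_invariant (hne v) (geodesicallyConvex_fixedPoints _) (hne u)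
        fun g hg x hx => smul_mem_fixedPoints (hcomm v u h.symm hg) hx
    · obtain ⟨x, hx⟩ := fixedPoints_centralizer_nonempty hinv (hne w)
        fun x hx y hy => hdist w hx hy
      exact ⟨x, fixedPoints_anti (hcomm u w huw) hx, fixedPoints_anti (hcomm v w hwv.symm) hx⟩
  obtain ⟨v₀⟩ : Nonempty ι := inferInstance
  obtain ⟨p, hp⟩ := hne v₀
  obtain ⟨x, hx⟩ := GeodesicallyConvex.nonempty_iInter A.isTree
    (fun v => geodesicallyConvex_fixedPoints (K v : Set G)) hmeet
    fun v => (hmeet v₀ v).imp fun x hx => ⟨hx.2, hdist v₀ hp hx.1⟩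
  exact ⟨x, fun v => Set.mem_iInter.1 hx v⟩

end TreeAction

/-! ### Incidence graphs and subdivisions -/

section IncidenceGraph

variable {P Q : Type*} {I : P → Q → Prop}

/-- The bipartite graph of an incidence relation between points `P` and lines `Q`. -/
def incidenceGraph (I : P → Q → Prop) : SimpleGraph (P ⊕ Q) where
  Adj
    | .inl p, .inr q => I p q
    | .inr q, .inl p => I p q
    | _, _ => False
  symm := ⟨by rintro (p | q) (p' | q') h <;> exact h⟩
  loopless := ⟨by rintro (p | q) h <;> exact h⟩

namespace incidenceGraph

@[simp]
theorem adj_inl_inr {p : P} {q : Q} : (incidenceGraph I).Adj (.inl p) (.inr q) ↔ I p q := Iff.rfl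

@[simp]
theorem adj_inr_inl {p : P} {q : Q} : (incidenceGraph I).Adj (.inr q) (.inl p) ↔ I p q := Iff.rfl

@[simp]
theorem not_adj_inl_inl (p p' : P) : ¬ (incidenceGraph I).Adj (.inl p) (.inl p') := id

@[simp]
theorem not_adj_inr_inr (q q' : Q) : ¬ (incidenceGraph I).Adj (.inr q) (.inr q') := id

theorem reachable_of_common {p p' : P} {q : Q} (hp : I p q) (hp' : I p' q) :
    (incidenceGraph I).Reachable (.inl p) (.inl p') :=
  (adj_inl_inr.2 hp).reachable.trans (adj_inr_inl.2 hp').reachable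

theorem connected [Nonempty P] (hP : ∀ p p', (incidenceGraph I).Reachable (.inl p) (.inl p'))
    (hQ : ∀ q, ∃ p, I p q) : (incidenceGraph I).Connected := by
  obtain ⟨r⟩ := ‹Nonempty P›
  refine (SimpleGraph.connected_iff_exists_forall_reachable _).2 ⟨.inl r, ?_⟩
  rintro (p | q)
  · exact hP r p
  · obtain ⟨p, hp⟩ := hQ q
    exact (hP r p).trans (adj_inl_inr.2 hp).reachable

theorem dist_inl_inl_le_two {p p' : P} {q : Q} (hp : I p q)
    (hp' : I p' q) : (incidenceGraph I).dist (.inl p) (.inl p') ≤ 2 :=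
  SimpleGraph.dist_le (.cons (adj_inl_inr.2 hp) (.cons (adj_inr_inl.2 hp') .nil))

theorem exists_inl_geodesicBtw (hI : (incidenceGraph I).Connected) {x y : P ⊕ Q} (hxy : x ≠ y) :
    ∃ p : P, GeodesicBtw (incidenceGraph I) x (.inl p) y ∧
      (incidenceGraph I).dist x (.inl p) ≤ 1 := by
  rcases x with p | q
  · exact ⟨p, GeodesicBtw.left _ _ _, by simp⟩
  obtain ⟨z, hz, hdist⟩ := GeodesicBtw.exists_of_le_dist hI (hI.pos_dist_of_ne hxy)
  rcases z with p | q'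
  · exact ⟨p, hz, hdist.le⟩
  · exact absurd (SimpleGraph.dist_eq_one_iff_adj.1 hdist) (not_adj_inr_inr q q')

theorem exists_inl_dist_ge (hI : (incidenceGraph I).Connected) {n : ℕ} {x y : P ⊕ Q}
    (hxy : n + 2 ≤ (incidenceGraph I).dist x y) : ∃ p p' : P,
      n ≤ (incidenceGraph I).dist (.inl p) (.inl p') ∧
      GeodesicBtw (incidenceGraph I) x (.inl p) y ∧
      GeodesicBtw (incidenceGraph I) (.inl p) (.inl p') y := by
  have ne_of_pos {u v : P ⊕ Q} (h : 0 < (incidenceGraph I).dist u v) : u ≠ v := by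
    rintro rfl
    simp at h
  obtain ⟨p, hp, hpx⟩ := exists_inl_geodesicBtw hI (ne_of_pos ((Nat.succ_pos _).trans_le hxy))
  obtain ⟨p', hp', hpy⟩ := exists_inl_geodesicBtw hI (x := y) (y := .inl p) <| ne_of_pos <| by
    rw [SimpleGraph.dist_comm]
    unfold GeodesicBtw at hp
    omega
  refine ⟨p, p', ?_, hp, hp'.symm⟩
  have h := hp'.symm
  rw [SimpleGraph.dist_comm] at hpy
  unfold GeodesicBtw at hp h
  omega

theorem exists_geodesicBtw_of_six_le_dist (hI : (incidenceGraph I).Connected) {x y : P ⊕ Q}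
    (hxy : 6 ≤ (incidenceGraph I).dist x y) :
    ∃ (p₁ p₂ p₃ : P) (q₁ q₂ : Q), q₁ ≠ q₂ ∧ I p₁ q₁ ∧ I p₂ q₁ ∧ I p₂ q₂ ∧ I p₃ q₂ ∧
      p₁ ≠ p₂ ∧ p₃ ≠ p₂ ∧ GeodesicBtw (incidenceGraph I) x (.inl p₁) y ∧
      GeodesicBtw (incidenceGraph I) x (.inl p₂) y ∧
      GeodesicBtw (incidenceGraph I) x (.inl p₃) y := by
  obtain ⟨p, p', hdist, hp, hp'⟩ := exists_inl_dist_ge (n := 4) hI hxy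
  have trans {z : P ⊕ Q} (hz : GeodesicBtw (incidenceGraph I) (.inl p) z (.inl p')) :
      GeodesicBtw (incidenceGraph I) x z y :=
    (hp.symm.trans_left hI (hp'.trans_left hI hz).symm).symm
  obtain ⟨w, hw⟩ := hI.exists_walk_length_eq_dist (.inl p) (.inl p')
  have hpath := w.isPath_of_length_eq_dist hw
  have hbtw (z) (hz : z ∈ w.support) := trans (.of_mem_support hI hw hz)
  rw [← hw] at hdist
  match w, hdist with
  | .cons (v := .inl _) h _, _ => exact absurd h (not_adj_inl_inl _ _)
  | .cons (v := .inr _) _ (.cons (v := .inr _) h _), _ => exact absurd h (not_adj_inr_inr _ _)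
  | .cons _ (.cons (v := .inl _) _ (.cons (v := .inl _) h _)), _ =>
    exact absurd h (not_adj_inl_inl _ _)
  | .cons _ (.cons _ (.cons (v := .inr _) _ (.cons (v := .inr _) h _))), _ =>
    exact absurd h (not_adj_inr_inr _ _)
  | .cons (v := .inr q₁) h₁ (.cons (v := .inl p₂) h₂ (.cons (v := .inr q₂) h₃
      (.cons (v := .inl p₃) h₄ tail))), _ =>
    have hp₃ := tail.start_mem_support
    simp only [SimpleGraph.Walk.cons_isPath_iff, SimpleGraph.Walk.support_cons, List.mem_cons,
      Sum.inl.injEq, Sum.inr.injEq, reduceCtorEq, false_or, not_or] at hpath hbtw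
    refine ⟨p, p₂, p₃, q₁, q₂, hpath.1.2.1, h₁, h₂, h₃, h₄, hpath.2.1, ?_, hp,
      hbtw _ (.inr <| .inr <| .inl rfl), hbtw _ (by simp [hp₃])⟩
    rintro rfl
    exact hpath.1.1.2 hp₃

theorem isTree_of_rank (hI : (incidenceGraph I).Connected) (rP : P → ℕ) (rQ : Q → ℕ)
    (hP : ∀ p q q', I p q → I p q' → rQ q ≤ rP p → rQ q' ≤ rP p → q = q')
    (hQ : ∀ q p p', I p q → I p' q → rP p ≤ rQ q → rP p' ≤ rQ q → p = p') :
    (incidenceGraph I).IsTree := by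
  refine _root_.isTree_of_rank hI (Sum.elim rP rQ) ?_
  rintro (p | q) (p' | q') (p'' | q'') h h' hle hle'
  all_goals first | exact h.elim | exact h'.elim | skip
  exacts [congrArg _ (hP p q' q'' h h' hle hle'), congrArg _ (hQ q p' p'' h h' hle hle')]

end incidenceGraph

end IncidenceGraph

namespace TreeAction

variable {G : Type*} [Group G]

/-- A group acting on the points and lines of an incidence geometry whose incidence graph is a
tree acts on this tree. -/
def ofIncidence {P Q : Type} [MulAction G P] [MulAction G Q] (I : P → Q → Prop)
    (hI : ∀ (g : G) p q, I p q → I (g • p) (g • q)) (hT : (incidenceGraph I).IsTree) :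
    TreeAction G where
  V := P ⊕ Q
  T := incidenceGraph I
  isTree := hT
  act :=
    have hadj (g : G) {x y : P ⊕ Q} (h : (incidenceGraph I).Adj x y) :
        (incidenceGraph I).Adj (g • x) (g • y) := by
      rcases x with p | q <;> rcases y with p' | q'
      exacts [h.elim, hI g p q' h, hI g p' q h, h.elim]
    { toFun g :=
        { toEquiv := MulAction.toPerm g
          map_rel_iff' {x y} := ⟨fun h => by simpa using hadj g⁻¹ h, hadj g⟩ }
      map_one' := by ext x : 1; exact one_smul G x
      map_mul' g h := by ext x : 1; exact mul_smul g h x }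

/-- The action of `G'` through a homomorphism to `G`. -/
def comap {G' : Type*} [Group G'] (A : TreeAction G) (φ : G' →* G) : TreeAction G' where
  V := A.V
  T := A.T
  isTree := A.isTree
  act := A.act.comp φ

theorem KCAcylindrical.comap {G' : Type*} [Group G'] {A : TreeAction G} {k C : ℕ}
    (hA : A.KCAcylindrical k C) {φ : G' →* G} (hφ : Function.Injective φ) :
    (A.comap φ).KCAcylindrical k C := fun x y hxy =>
  have ⟨hfin, hcard⟩ := hA x y hxy
  ⟨hfin.preimage hφ.injOn, (Set.ncard_le_ncard_of_injOn φ (fun _ h => h) hφ.injOn hfin).trans hcard⟩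

theorem noInversions_ofIncidence {P Q : Type} [MulAction G P] [MulAction G Q] {I : P → Q → Prop}
    (hI : ∀ (g : G) p q, I p q → I (g • p) (g • q)) (hT : (incidenceGraph I).IsTree) :
    (ofIncidence I hI hT).NoInversions := by
  rintro g (p | q) h <;> exact h

end TreeAction

section Subdivision

/-- The barycentric subdivision of a graph, as the incidence graph of its vertices and edges. -/
def barycentricSubdivision {V : Type*} (T : SimpleGraph V) : SimpleGraph (V ⊕ T.edgeSet) :=
  incidenceGraph fun x e => x ∈ e.1

variable {V : Type*} {T : SimpleGraph V}

theorem connected_barycentricSubdivision (hT : T.Connected) :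
    (barycentricSubdivision T).Connected := by
  have := hT.nonempty
  refine incidenceGraph.connected (fun x y => ?_) fun e => ⟨_, e.1.out_fst_mem⟩
  obtain ⟨p⟩ := hT x y
  induction p with
  | nil => exact .refl _
  | @cons u v w hadj _ ih =>
    exact (incidenceGraph.reachable_of_common (q := ⟨s(u, v), hadj⟩)
      (Sym2.mem_mk_left u v) (Sym2.mem_mk_right u v)).trans ih

/-- Towards a root, a vertex has at most one edge and an edge exactly one end. -/
theorem isTree_barycentricSubdivision (hT : T.IsTree) : (barycentricSubdivision T).IsTree := by
  obtain ⟨r⟩ := hT.connected.nonempty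
  refine incidenceGraph.isTree_of_rank (connected_barycentricSubdivision hT.connected)
    (fun x => 2 * T.dist r x) (fun e => 2 * (e.1.map (T.dist r)).inf + 1) ?_ ?_
  · rintro x ⟨e, he⟩ ⟨e', he'⟩ ⟨y, rfl⟩ ⟨y', rfl⟩ hle hle'
    have hxy : T.Adj x y := he
    have hxy' : T.Adj x y' := he'
    have hdist := SimpleGraph.dist_eq_one_iff_adj.2 hxy.symm
    have hdist' := SimpleGraph.dist_eq_one_iff_adj.2 hxy'.symm
    have hr := hT.dist_eq_dist_add_one_of_adj r hxy
    have hr' := hT.dist_eq_dist_add_one_of_adj r hxy'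
    simp only [Sym2.map_mk, Sym2.inf_mk] at hle hle'
    have hyy' : y = y' := GeodesicBtw.eq_of_dist_eq hT (x := r) (y := x)
      (by unfold GeodesicBtw; omega) (by unfold GeodesicBtw; omega) (by omega)
    subst hyy'
    rfl
  · rintro ⟨e, he⟩ x y hx hy hle hle'
    induction e using Sym2.ind with
    | _ u v =>
      have huv := hT.dist_eq_dist_add_one_of_adj r he
      simp only [Sym2.map_mk, Sym2.inf_mk, Sym2.mem_iff] at hx hy hle hle'
      grind

theorem dist_barycentricSubdivision_le (hT : T.Connected) (x y : V) :
    (barycentricSubdivision T).dist (.inl x) (.inl y) ≤ 2 * T.dist x y :=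
  graphDist_map_le hT (connected_barycentricSubdivision hT) Sum.inl 2
    (fun u v h => incidenceGraph.dist_inl_inl_le_two (q := ⟨s(u, v), h⟩)
      (Sym2.mem_mk_left u v) (Sym2.mem_mk_right u v)) x y

end Subdivision

namespace TreeAction

variable {G : Type*} [Group G] {A : TreeAction G}

instance (A : TreeAction G) : MulAction G A.T.edgeSet where
  smul g e := (A.act g).mapEdgeSet e
  one_smul e := Subtype.ext <| by
    change Sym2.map (A.act 1) e.1 = e.1
    rw [map_one]
    exact congrFun Sym2.map_id e.1
  mul_smul g h e := Subtype.ext <| by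
    change Sym2.map (A.act (g * h)) e.1 = Sym2.map (A.act g) (Sym2.map (A.act h) e.1)
    rw [map_mul, Sym2.map_map]
    rfl

theorem mem_smul_edge {x : A.V} {e : A.T.edgeSet} (g : G) (h : x ∈ e.1) : g • x ∈ (g • e).1 :=
  Sym2.mem_map.2 ⟨x, h, rfl⟩

/-- The induced action on the barycentric subdivision of the tree. -/
def subdivision (A : TreeAction G) : TreeAction G :=
  ofIncidence (fun (x : A.V) (e : A.T.edgeSet) => x ∈ e.1) (fun g _ _ h => mem_smul_edge g h)
    (isTree_barycentricSubdivision A.isTree)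

theorem noInversions_subdivision (A : TreeAction G) : A.subdivision.NoInversions :=
  noInversions_ofIncidence _ _

theorem KCAcylindrical.subdivision {k C : ℕ} (hA : A.KCAcylindrical k C) :
    A.subdivision.KCAcylindrical (2 * k + 2) C := by
  intro p q hpq
  obtain ⟨x, y, hxy, hx, hy⟩ :=
    incidenceGraph.exists_inl_dist_ge A.subdivision.isTree.connected hpq
  have hle := dist_barycentricSubdivision_le A.isTree.connected x y
  obtain ⟨hfin, hcard⟩ := hA x y (Nat.le_of_mul_le_mul_left (hxy.trans hle) two_pos)
  have hsub : {g : G | A.subdivision.act g p = p ∧ A.subdivision.act g q = q} ⊆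
      {g : G | A.act g x = x ∧ A.act g y = y} := fun g hg => by
    have hgx := A.subdivision.smul_eq_of_geodesicBtw hg.1 hg.2 hx
    have hgy := A.subdivision.smul_eq_of_geodesicBtw hgx hg.2 hy
    exact ⟨Sum.inl_injective hgx, Sum.inl_injective hgy⟩
  exact ⟨hfin.subset hsub, (Set.ncard_le_ncard hsub hfin).trans hcard⟩

theorem boundedOrbits_of_fixesPoint_subdivision (hA : A.subdivision.FixesPoint) :
    A.BoundedOrbits := by
  obtain ⟨x | ⟨e, he⟩, hfix⟩ := hA
  · exact ⟨x, 0, fun g => by rw [show A.act g x = x from Sum.inl_injective (hfix g)]; simp⟩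
  induction e using Sym2.ind with
  | _ x y =>
    refine ⟨x, 1, fun g => ?_⟩
    have hedge : s(A.act g x, A.act g y) = s(x, y) :=
      congrArg Subtype.val (Sum.inr_injective (hfix g))
    have hmem : A.act g x ∈ s(x, y) := hedge ▸ Sym2.mem_mk_left _ _
    rcases Sym2.mem_iff.1 hmem with h | h <;> rw [h]
    · simp
    · exact (SimpleGraph.dist_eq_one_iff_adj.2 he).le

end TreeAction

/-! ### Graph products of small diameter -/

namespace IsVirtuallyCyclic

variable {G : Type*} [Group G]

theorem not_disjoint (hG : IsVirtuallyCyclic G) {K L : Subgroup G} [Infinite K] [Infinite L] :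
    ¬ Disjoint K L := by
  obtain ⟨H, hH, hcyc⟩ := hG
  obtain ⟨⟨z, hzH⟩, hz⟩ := hcyc.exists_generator
  have exists_zpow_mem (M : Subgroup G) [Infinite M] : ∃ n : ℤ, z ^ n ∈ M ∧ n ≠ 0 := by
    obtain ⟨a, b, hab, h⟩ := Finite.exists_ne_map_eq_of_infinite fun a : M => (a : G ⧸ H)
    obtain ⟨n, hn⟩ := hz ⟨_, QuotientGroup.eq.1 h⟩
    have hn : z ^ n = (a : G)⁻¹ * b := congrArg Subtype.val hn
    refine ⟨n, hn ▸ M.mul_mem (M.inv_mem a.2) b.2, ?_⟩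
    rintro rfl
    exact hab (Subtype.ext (inv_mul_eq_one.1 (hn.symm.trans (zpow_zero z))))
  obtain ⟨m, hm, hm0⟩ := exists_zpow_mem K
  obtain ⟨n, hn, hn0⟩ := exists_zpow_mem L
  intro hKL
  have hmn : z ^ (m * n) = 1 := Subgroup.disjoint_def.1 hKL
    (zpow_mul z m n ▸ K.zpow_mem hm n) (zpow_mul' z m n ▸ L.zpow_mem hn m)
  have hz_fin : IsOfFinOrder (⟨z, hzH⟩ : H) :=
    isOfFinOrder_iff_zpow_eq_one.2 ⟨m * n, mul_ne_zero hm0 hn0, Subtype.ext hmn⟩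
  have : Finite H := Set.finite_univ_iff.1 <|
    (Set.eq_univ_of_forall hz) ▸ finite_zpowers.2 hz_fin
  have : Finite G := Finite.of_subgroup_quotient H
  exact not_finite_iff_infinite.2 ‹Infinite K› inferInstance

end IsVirtuallyCyclic

namespace GraphProduct

variable {V : Type} {Γ : SimpleGraph V} {Gv : V → Type} [∀ v, Group (Gv v)]

theorem commute_of {u v : V} (h : Γ.Adj u v) (a : Gv u) (b : Gv v) :
    Commute (of Γ Gv u a) (of Γ Gv v b) := by
  have hrel : of Γ Gv u a * of Γ Gv v b * (of Γ Gv u a)⁻¹ * (of Γ Gv v b)⁻¹ = 1 :=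
    (QuotientGroup.eq_one_iff (N := Subgroup.normalClosure (graphProductRels Γ Gv)) _).2
      (Subgroup.subset_normalClosure ⟨u, v, h, a, b, rfl⟩)
  rwa [mul_inv_eq_one, mul_inv_eq_iff_eq_mul] at hrel

/-- The universal property of the graph product. -/
def lift {H : Type*} [Group H] (f : ∀ v, Gv v →* H)
    (hf : ∀ u v, Γ.Adj u v → ∀ a b, Commute (f u a) (f v b)) : GraphProduct Γ Gv →* H :=
  QuotientGroup.lift _ (Monoid.CoprodI.lift f) <| show _ ≤ (Monoid.CoprodI.lift f).ker by
    refine Subgroup.normalClosure_le_normal ?_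
    rintro _ ⟨u, v, h, a, b, rfl⟩
    simp [MonoidHom.mem_ker, (hf u v h a b).eq]

@[simp]
theorem lift_of {H : Type*} [Group H] (f : ∀ v, Gv v →* H)
    (hf : ∀ u v, Γ.Adj u v → ∀ a b, Commute (f u a) (f v b)) (v : V) (a : Gv v) :
    lift f hf (of Γ Gv v a) = f v a :=
  Monoid.CoprodI.lift_of f a

@[elab_as_elim]
theorem induction_on {P : GraphProduct Γ Gv → Prop} (x : GraphProduct Γ Gv) (one : P 1)
    (of : ∀ v a, P (of Γ Gv v a)) (mul : ∀ x y, P x → P y → P (x * y)) : P x := by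
  obtain ⟨w, rfl⟩ := QuotientGroup.mk_surjective x
  induction w using Monoid.CoprodI.induction_on with
  | one => exact one
  | of v a => exact of v a
  | mul x y hx hy => exact mul _ _ hx hy

open Classical in
theorem exists_projection (Γ : SimpleGraph V) (Gv : V → Type) [∀ v, Group (Gv v)] :
    ∃ f : GraphProduct Γ Gv →* ∀ v, Gv v, ∀ v a, f (of Γ Gv v a) = Pi.mulSingle v a :=
  ⟨lift (fun v => MonoidHom.mulSingle Gv v)
    fun _ _ h a b => Pi.mulSingle_commute (f := Gv) h.ne a b, fun v a => lift_of _ _ v a⟩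

theorem of_injective (v : V) : Function.Injective (of Γ Gv v) := by
  classical
  obtain ⟨f, hf⟩ := exists_projection Γ Gv
  exact fun a b h => Pi.mulSingle_injective v (by rw [← hf, ← hf, h])

theorem disjoint_range_of {u v : V} (h : u ≠ v) :
    Disjoint (of Γ Gv u).range (of Γ Gv v).range := by
  classical
  obtain ⟨f, hf⟩ := exists_projection Γ Gv
  rw [Subgroup.disjoint_def]
  rintro _ ⟨a, rfl⟩ ⟨b, hab⟩
  have ha := congrFun ((hf u a).symm.trans (hab ▸ hf v b)) u
  rw [Pi.mulSingle_eq_same, Pi.mulSingle_eq_of_ne h] at ha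
  rw [ha, map_one]

theorem not_isVirtuallyCyclic [Nontrivial V] [∀ v, Infinite (Gv v)] :
    ¬ IsVirtuallyCyclic (GraphProduct Γ Gv) := by
  obtain ⟨u, v, huv⟩ := exists_pair_ne V
  have hinf (v : V) : Infinite (of Γ Gv v).range :=
    Infinite.of_injective _ (MonoidHom.ofInjective (of_injective v)).injective
  exact fun h => h.not_disjoint (disjoint_range_of huv)

theorem adj_or_exists_adj_of_not_diamAtLeast_three (hΓ : ¬ Γ.diamAtLeast 3) {u v : V}
    (huv : u ≠ v) : Γ.Adj u v ∨ ∃ w, Γ.Adj u w ∧ Γ.Adj w v := by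
  have h : Γ.Reachable u v ∧ Γ.dist u v < 3 := by
    by_contra! h
    exact hΓ ⟨u, v, huv, or_iff_not_imp_left.2 fun hr => h (not_not.1 hr)⟩
  obtain ⟨⟨p, hp⟩, hlt⟩ := And.imp_left SimpleGraph.Reachable.exists_walk_length_eq_dist h
  rw [← hp] at hlt
  match p, hlt with
  | .nil, _ => exact absurd rfl huv
  | .cons h .nil, _ => exact .inl h
  | .cons h (.cons h' .nil), _ => exact .inr ⟨_, h, h'⟩
  | .cons _ (.cons _ (.cons _ _)), hlt =>
    exact absurd hlt (by simp only [SimpleGraph.Walk.length_cons]; omega)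

theorem diamAtLeast_three_of_acylindricallyArboreal [Nontrivial V] [∀ v, Infinite (Gv v)]
    (h : AcylindricallyArboreal (GraphProduct Γ Gv)) : Γ.diamAtLeast 3 := by
  by_contra hΓ
  obtain ⟨A, ⟨k, C, -, hA⟩, hunbounded, -⟩ := h
  have hinf (v : V) : Infinite (of Γ Gv v).range :=
    Infinite.of_injective _ (MonoidHom.ofInjective (of_injective v)).injective
  obtain ⟨x, hx⟩ := hA.subdivision.exists_fixed_of_commuting_family A.noInversions_subdivision Γ
    (fun u v => adj_or_exists_adj_of_not_diamAtLeast_three hΓ) (fun v => (of Γ Gv v).range)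
    (fun u v huv => by
      rintro _ ⟨a, rfl⟩
      rw [Subgroup.mem_centralizer_iff]
      rintro _ ⟨b, rfl⟩
      exact (commute_of huv a b).eq.symm)
    fun u v huv => disjoint_range_of huv.ne
  refine hunbounded (A.boundedOrbits_of_fixesPoint_subdivision ⟨x, fun g => ?_⟩)
  induction g using induction_on with
  | one => rw [map_one]; rfl
  | of v a => exact hx v _ ⟨a, rfl⟩
  | mul g h hg hh => rw [map_mul, RelIso.mul_apply, hh, hg]

end GraphProduct

/-! ### Groups acting factorwise on a free product -/

section FreeProductTree

open Monoid

variable {H N : Type*} [Group H] [Group N]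

/-- An action by endomorphisms of a group, as an action by automorphisms. -/
def autOfEnd (f : H → N →* N) (one : f 1 = .id N) (mul : ∀ g h, f (g * h) = (f g).comp (f h)) :
    H →* MulAut N :=
  letI : MulDistribMulAction H N :=
    { smul h n := f h n
      one_smul := DFunLike.congr_fun one
      mul_smul g h := DFunLike.congr_fun (mul g h)
      smul_one h := map_one (f h)
      smul_mul h := map_mul (f h) }
  MulDistribMulAction.toMulAut H N

/-- The action `x • n = x.left * φ x.right n` of a semidirect product on its normal factor. -/
instance semidirectProductMulAction {φ : H →* MulAut N} : MulAction (N ⋊[φ] H) N where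
  smul x n := x.left * φ x.right n
  one_smul n := by change 1 * _ = _; simp
  mul_smul x y n := by change _ * _ = _ * φ _ (_ * _); simp [mul_assoc]

theorem semidirectProduct_smul_def {φ : H →* MulAut N} (x : N ⋊[φ] H) (n : N) :
    x • n = x.left * φ x.right n := rfl

variable {J : Type*} {K : J → Type*} [∀ j, Group (K j)]

/-- The factor `j` as a subgroup of the free product. -/
abbrev freeFactor (K : J → Type*) [∀ j, Group (K j)] (j : J) : Subgroup (CoprodI K) :=
  (CoprodI.of (M := K) (i := j)).range

theorem eq_one_of_conj_mem_freeFactor {i j : J} (hij : i ≠ j) {k : K i} {n : CoprodI K}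
    (h : n⁻¹ * (CoprodI.of k * n) ∈ freeFactor K j) : k = 1 := by
  classical
  obtain ⟨l, hl⟩ := h
  have hret := congrArg (CoprodI.lift (Pi.mulSingle i (MonoidHom.id (K i)))) hl
  rw [map_mul, map_mul, CoprodI.lift_of, CoprodI.lift_of, Pi.mulSingle_eq_same,
    Pi.mulSingle_eq_of_ne hij.symm, map_inv, MonoidHom.one_apply, eq_comm, inv_mul_eq_one] at hret
  exact right_eq_mul.1 hret

/-- The action on a free product given by actions on its factors. -/
def factorwiseAut (α : ∀ j, H →* MulAut (K j)) : H →* MulAut (CoprodI K) :=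
  autOfEnd (fun h => CoprodI.lift fun j => CoprodI.of.comp (α j h).toMonoidHom)
    (CoprodI.ext_hom _ _ fun j => by ext; simp) fun g h => CoprodI.ext_hom _ _ fun j => by ext; simp

@[simp]
theorem factorwiseAut_of (α : ∀ j, H →* MulAut (K j)) (h : H) (j : J) (k : K j) :
    factorwiseAut α h (CoprodI.of k) = CoprodI.of (α j h k) := by
  change CoprodI.lift (fun j => CoprodI.of.comp (α j h).toMonoidHom) (CoprodI.of k) = _
  rw [CoprodI.lift_of]
  rfl

open Classical in
/-- The reduced word of `n⁻¹` stripped of its head in the factor `j`; it determines the coset of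
`n` modulo this factor. -/
noncomputable def cosetWord (j : J) (n : CoprodI K) : CoprodI.Word K :=
  (CoprodI.Word.equivPair j (CoprodI.Word.equiv n⁻¹)).tail

theorem cosetWord_congr {j : J} {n m : CoprodI K}
    (h : n⁻¹ * m ∈ freeFactor K j) : cosetWord j n = cosetWord j m := by
  classical
  obtain ⟨k, hk⟩ := h
  have hn : n⁻¹ = CoprodI.of k * m⁻¹ := by rw [hk, mul_inv_cancel_right]
  have hword : CoprodI.Word.equiv (CoprodI.of k * m⁻¹) =
      CoprodI.of k • CoprodI.Word.equiv m⁻¹ := by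
    rw [CoprodI.Word.equiv, Equiv.coe_fn_mk, mul_smul]
  rw [cosetWord, cosetWord, hn, hword, CoprodI.Word.equivPair_smul_same]

open Classical in
theorem cosetWord_cases (j : J) (n : CoprodI K) :
    cosetWord j n = CoprodI.Word.equiv n⁻¹ ∨ (CoprodI.Word.equiv n⁻¹).fstIdx = some j ∧
      (CoprodI.Word.equiv n⁻¹).toList.length = (cosetWord j n).toList.length + 1 := by
  unfold cosetWord
  generalize CoprodI.Word.equiv n⁻¹ = w
  by_cases hw : w.fstIdx = some j
  · refine .inr ⟨hw, ?_⟩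
    have hrcons := (CoprodI.Word.equivPair j).symm_apply_apply w
    have htail := (CoprodI.Word.equivPair j w).fstIdx_ne
    rw [CoprodI.Word.equivPair_symm, CoprodI.Word.rcons] at hrcons
    split_ifs at hrcons with hhead
    · exact absurd hw (by rwa [hrcons] at htail)
    · simpa only [CoprodI.Word.cons, List.length_cons] using
        congrArg (fun w => w.toList.length) hrcons.symm
  · exact .inl (by rw [CoprodI.Word.equivPair_eq_of_fstIdx_ne hw])

end FreeProductTree

namespace FactorwiseAction

open Monoid

variable {H J : Type} [Group H] {K : J → Type} [∀ j, Group (K j)] (α : ∀ j, H →* MulAut (K j))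

theorem map_mem_freeFactor_iff {h : H} {j : J} {n : CoprodI K} :
    factorwiseAut α h n ∈ freeFactor K j ↔ n ∈ freeFactor K j := by
  refine ⟨fun ⟨k, hk⟩ => ⟨α j h⁻¹ k, ?_⟩, fun ⟨k, hk⟩ => ⟨α j h k, ?_⟩⟩
  · rw [← factorwiseAut_of, hk, map_inv, MulAut.inv_apply_self]
  · rw [← factorwiseAut_of, hk]

/-- The elements of the semidirect product which preserve the factor `j`. -/
def lineStabilizer (j : J) : Subgroup (CoprodI K ⋊[factorwiseAut α] H) where
  carrier := {x | x.left ∈ freeFactor K j}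
  one_mem' := one_mem (freeFactor K j)
  mul_mem' hx hy :=
    mul_mem (S := Subgroup (CoprodI K)) hx ((map_mem_freeFactor_iff α).2 hy)
  inv_mem' hx := (map_mem_freeFactor_iff α).2 (inv_mem (S := Subgroup (CoprodI K)) hx)

/-- The cosets of the factors of the free product, encoded as cosets in the semidirect product so
that the latter acts on them. -/
abbrev Line : Type := Σ j, (CoprodI K ⋊[factorwiseAut α] H) ⧸ lineStabilizer α j

/-- The coset of `n` modulo the factor `j`. -/
def lineThrough (j : J) (n : CoprodI K) : Line α :=
  ⟨j, (SemidirectProduct.inl n : CoprodI K ⋊[factorwiseAut α] H)⟩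

variable {α}

/-- The element `n` of the free product lies on the line `ℓ`. -/
def LiesOn (n : CoprodI K) (ℓ : Line α) : Prop := ∃ j, lineThrough α j n = ℓ

theorem mk_eq_mk_iff {j : J} {x y : CoprodI K ⋊[factorwiseAut α] H} :
    (x : (CoprodI K ⋊[factorwiseAut α] H) ⧸ lineStabilizer α j) = y ↔
      x.left⁻¹ * y.left ∈ freeFactor K j := by
  rw [QuotientGroup.eq, ← map_mem_freeFactor_iff α (h := x.right⁻¹), map_mul]
  exact Iff.rfl

theorem lineThrough_eq_iff {i j : J} {n m : CoprodI K} :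
    lineThrough α i n = lineThrough α j m ↔ i = j ∧ n⁻¹ * m ∈ freeFactor K i := by
  refine ⟨fun h => ?_, ?_⟩
  · obtain rfl : i = j := congrArg Sigma.fst h
    exact ⟨rfl, mk_eq_mk_iff.1 (eq_of_heq (Sigma.mk.inj h).2)⟩
  · rintro ⟨rfl, h⟩
    exact congrArg (Sigma.mk i) (mk_eq_mk_iff.2 h)

theorem exists_liesOn (ℓ : Line α) : ∃ n, LiesOn n ℓ := by
  obtain ⟨j, c⟩ := ℓ
  obtain ⟨x, rfl⟩ := QuotientGroup.mk_surjective c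
  exact ⟨x.left, j, congrArg (Sigma.mk j) (mk_eq_mk_iff.2 (by simp))⟩

theorem smul_lineThrough (x : CoprodI K ⋊[factorwiseAut α] H) (j : J) (n : CoprodI K) :
    x • lineThrough α j n = lineThrough α j (x • n) :=
  congrArg (Sigma.mk j) (mk_eq_mk_iff.2 (by simp [semidirectProduct_smul_def]))

theorem LiesOn.smul (x : CoprodI K ⋊[factorwiseAut α] H) {n : CoprodI K} {ℓ : Line α} :
    LiesOn n ℓ → LiesOn (x • n) (x • ℓ) := by
  rintro ⟨j, rfl⟩
  exact ⟨j, (smul_lineThrough x j n).symm⟩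

variable (α) in
theorem connected_incidenceGraph : (incidenceGraph (LiesOn (α := α))).Connected := by
  refine incidenceGraph.connected (fun n m => ?_) exists_liesOn
  suffices h : ∀ x n, (incidenceGraph (LiesOn (α := α))).Reachable (.inl n) (.inl (n * x)) by
    simpa using h (n⁻¹ * m) n
  intro x
  induction x using CoprodI.induction_on with
  | one => simp
  | of j k =>
    exact fun n => incidenceGraph.reachable_of_common ⟨j, rfl⟩
      ⟨j, lineThrough_eq_iff.2 ⟨rfl, by simp⟩⟩
  | mul x y hx hy => exact fun n => mul_assoc n x y ▸ (hx n).trans (hy (n * x))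

open Classical in
variable (α) in
theorem isTree_incidenceGraph : (incidenceGraph (LiesOn (α := α))).IsTree := by
  choose base hbase using exists_liesOn (α := α)
  choose index hindex using hbase
  have hword (j : J) (n : CoprodI K) :
      cosetWord (index (lineThrough α j n)) (base (lineThrough α j n)) = cosetWord j n := by
    obtain ⟨hj, hn⟩ := lineThrough_eq_iff.1 (hindex (lineThrough α j n))
    rw [cosetWord_congr hn, hj]
  refine incidenceGraph.isTree_of_rank (connected_incidenceGraph α)
    (fun n => 2 * (CoprodI.Word.equiv n⁻¹).toList.length)
    (fun ℓ => 2 * (cosetWord (index ℓ) (base ℓ)).toList.length + 1) ?_ ?_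
  · rintro n _ _ ⟨i, rfl⟩ ⟨j, rfl⟩ hi hj
    have fstIdx_eq {j : J} (hj : 2 * (cosetWord j n).toList.length + 1 ≤
        2 * (CoprodI.Word.equiv n⁻¹).toList.length) :
        (CoprodI.Word.equiv n⁻¹).fstIdx = some j :=
      ((cosetWord_cases j n).resolve_left fun h => by rw [h] at hj; omega).1
    rw [hword] at hi hj
    rw [Option.some_injective _ ((fstIdx_eq hi).symm.trans (fstIdx_eq hj))]
  · rintro _ n m ⟨j, rfl⟩ ⟨i, hm⟩ hn_le hm_le
    obtain ⟨rfl, hmn⟩ := lineThrough_eq_iff.1 hm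
    have word_eq {n : CoprodI K} (h : 2 * (CoprodI.Word.equiv n⁻¹).toList.length ≤
        2 * (cosetWord i n).toList.length + 1) : cosetWord i n = CoprodI.Word.equiv n⁻¹ :=
      (cosetWord_cases i n).resolve_right fun h => by omega
    rw [hword] at hn_le hm_le
    rw [← cosetWord_congr hmn] at hm_le
    exact inv_injective <| CoprodI.Word.equiv.injective <|
      (word_eq hn_le).symm.trans <| (cosetWord_congr hmn).symm.trans (word_eq hm_le)

theorem LiesOn.exists_eq {n m : CoprodI K} {ℓ : Line α} (hn : LiesOn n ℓ) (hm : LiesOn m ℓ) :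
    ∃ (j : J) (k : K j), ℓ = lineThrough α j n ∧ m = n * CoprodI.of k := by
  obtain ⟨j, rfl⟩ := hn
  obtain ⟨i, hm⟩ := hm
  obtain ⟨rfl, k, hk⟩ := lineThrough_eq_iff.1 hm
  exact ⟨i, k⁻¹, rfl, by simp [hk]⟩

variable (α) in
/-- The Bass–Serre tree of the free product: elements and cosets of the factors. -/
def cosetTree : TreeAction (CoprodI K ⋊[factorwiseAut α] H) :=
  .ofIncidence LiesOn (fun x _ _ => LiesOn.smul x) (isTree_incidenceGraph α)

theorem apply_eq_of_smul_eq {x : CoprodI K ⋊[factorwiseAut α] H} {n : CoprodI K} {j : J} {k : K j}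
    (hn : x • n = n) (hnk : x • (n * CoprodI.of k) = n * CoprodI.of k) : α j x.right k = k := by
  rw [semidirectProduct_smul_def] at hn hnk
  rw [map_mul, ← mul_assoc, hn, factorwiseAut_of] at hnk
  exact CoprodI.of_injective j (mul_left_cancel hnk)

theorem eq_one_of_smul_eq {x : CoprodI K ⋊[factorwiseAut α] H} {n : CoprodI K} (hn : x • n = n)
    (hx : x.right = 1) : x = 1 := by
  rw [semidirectProduct_smul_def, hx, map_one, MulAut.one_apply, mul_eq_right] at hn
  exact SemidirectProduct.ext hn hx

/-- A geodesic of length six contains three elements `n`, `n * k` and `n * l` with `k` and `l` in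
distinct factors. -/
theorem kcAcylindrical_cosetTree
    (hα : ∀ h i j, i ≠ j → ∀ k ≠ 1, ∀ l ≠ 1, α i h k = k → α j h l = l → h = 1) :
    (cosetTree α).KCAcylindrical 6 1 := by
  intro x y hxy
  obtain ⟨m, n, m', ℓ, ℓ', hℓ, hmℓ, hnℓ, hnℓ', hmℓ', hnm, hnm', hm, hn, hm'⟩ :=
    incidenceGraph.exists_geodesicBtw_of_six_le_dist (connected_incidenceGraph α) hxy
  obtain ⟨i, k, rfl, rfl⟩ := hnℓ.exists_eq hmℓ
  obtain ⟨j, l, rfl, rfl⟩ := hnℓ'.exists_eq hmℓ'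
  have hij : i ≠ j := by
    rintro rfl
    exact hℓ rfl
  have eq_one (g : CoprodI K ⋊[factorwiseAut α] H) (hg : g • x = x ∧ g • y = y) : g = 1 := by
    have fixes {p : CoprodI K} (hp : GeodesicBtw (incidenceGraph (LiesOn (α := α))) x (.inl p) y) :
        g • p = p :=
      Sum.inl_injective <| TreeAction.smul_eq_of_geodesicBtw (A := cosetTree α) hg.1 hg.2 hp
    exact eq_one_of_smul_eq (fixes hn) <| hα _ i j hij k (by rintro rfl; simp at hnm) l
      (by rintro rfl; simp at hnm') (apply_eq_of_smul_eq (fixes hn) (fixes hm))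
      (apply_eq_of_smul_eq (fixes hn) (fixes hm'))
  have hsub : {g | (cosetTree α).act g x = x ∧ (cosetTree α).act g y = y} ⊆ {1} := eq_one
  exact ⟨(Set.finite_singleton _).subset hsub, by simpa using Set.ncard_le_ncard hsub⟩

theorem exists_eq_lineThrough_of_smul_eq {i : J} {k : K i} (hk : k ≠ 1) {x : CoprodI K ⊕ Line α}
    (hx : (SemidirectProduct.inl (CoprodI.of k) : CoprodI K ⋊[factorwiseAut α] H) • x = x) :
    ∃ n, x = .inr (lineThrough α i n) := by
  rcases x with n | ℓ
  · refine absurd (Sum.inl_injective hx) fun h => hk ?_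
    simpa [semidirectProduct_smul_def, map_eq_one_iff _ (CoprodI.of_injective i)] using h
  · obtain ⟨n, j, rfl⟩ := exists_liesOn ℓ
    have h : _ • lineThrough α j n = lineThrough α j n := Sum.inr_injective hx
    rw [smul_lineThrough, eq_comm, lineThrough_eq_iff] at h
    obtain rfl : i = j := by
      by_contra hij
      exact hk (eq_one_of_conj_mem_freeFactor hij (by simpa [semidirectProduct_smul_def] using h.2))
    exact ⟨n, rfl⟩

theorem acylindricallyArboreal {G : Type*} [Group G] (hG : ¬ IsVirtuallyCyclic G)
    {φ : G →* CoprodI K ⋊[factorwiseAut α] H} (hφ : Function.Injective φ)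
    (hα : ∀ h i j, i ≠ j → ∀ k ≠ 1, ∀ l ≠ 1, α i h k = k → α j h l = l → h = 1)
    {i j : J} (hij : i ≠ j) {k : K i} (hk : k ≠ 1) {l : K j} (hl : l ≠ 1) {g g' : G}
    (hg : φ g = .inl (CoprodI.of k)) (hg' : φ g' = .inl (CoprodI.of l)) :
    AcylindricallyArboreal G := by
  refine ⟨(cosetTree α).comap φ, ⟨6, 1, le_rfl, (kcAcylindrical_cosetTree hα).comap hφ⟩, ?_, hG⟩
  rintro ⟨v, B, hB⟩
  have hinv : ((cosetTree α).comap φ).NoInversions :=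
    fun g => TreeAction.noInversions_ofIncidence (fun x _ _ => LiesOn.smul x)
      (isTree_incidenceGraph α) (φ g)
  obtain ⟨x, hx⟩ := TreeAction.fixedPoints_nonempty_of_bounded hinv (K := ⊤) (x := v) (B := B)
    fun g _ => by rw [SimpleGraph.dist_comm]; exact hB g
  have fixes (g : G) : φ g • (show CoprodI K ⊕ Line α from x) = x := hx g trivial
  obtain ⟨n, rfl⟩ := exists_eq_lineThrough_of_smul_eq hk (hg ▸ fixes g)
  obtain ⟨m, hm⟩ := exists_eq_lineThrough_of_smul_eq hl (hg' ▸ fixes g')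
  exact hij (lineThrough_eq_iff.1 (Sum.inr_injective hm)).1

end FactorwiseAction

/-! ### Graph products of large diameter -/

section FreePower

open Monoid

variable {H I M : Type*} [Group H] [MulAction H I] [Group M]

/-- The action of `H` on a free product of copies of `M` by permuting the copies. -/
def permuteFactors (H I M : Type*) [Group H] [MulAction H I] [Group M] :
    H →* MulAut (CoprodI fun _ : I => M) :=
  autOfEnd (fun h => CoprodI.lift fun i => CoprodI.of (M := fun _ : I => M) (i := h • i))
    (CoprodI.ext_hom _ _ fun i => by ext m; simp [one_smul])
    fun g h => CoprodI.ext_hom _ _ fun i => by ext m; simp [mul_smul]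

theorem permuteFactors_of (h : H) (i : I) (m : M) :
    permuteFactors H I M h (CoprodI.of (M := fun _ : I => M) (i := i) m) =
      CoprodI.of (M := fun _ : I => M) (i := h • i) m := by
  change CoprodI.lift (fun i => CoprodI.of (M := fun _ : I => M) (i := h • i)) (CoprodI.of m) = _
  rw [CoprodI.lift_of]

/-- The reduced word obtained by permuting the copies of `M`. -/
def permuteWord (h : H) (w : CoprodI.Word fun _ : I => M) : CoprodI.Word fun _ : I => M where
  toList := w.toList.map fun p => ⟨h • p.1, p.2⟩
  ne_one := by
    intro l hl
    obtain ⟨p, hp, rfl⟩ := List.mem_map.1 hl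
    exact w.ne_one p hp
  chain_ne := by
    rw [List.isChain_map]
    exact w.chain_ne.imp fun p q hpq => by simpa using hpq

theorem prod_permuteWord (h : H) (w : CoprodI.Word fun _ : I => M) :
    (permuteWord h w).prod = permuteFactors H I M h w.prod := by
  simp only [CoprodI.Word.prod, permuteWord, map_list_prod, List.map_map]
  exact congrArg List.prod (List.map_congr_left fun p _ => (permuteFactors_of h p.1 p.2).symm)

theorem exists_smul_eq_of_permuteFactors_eq {h : H} {n : CoprodI fun _ : I => M} (hn : n ≠ 1)
    (hfix : permuteFactors H I M h n = n) : ∃ i : I, h • i = i := by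
  classical
  obtain ⟨w, rfl⟩ := CoprodI.Word.equiv.symm.surjective n
  have hw : permuteWord h w = w :=
    CoprodI.Word.equiv.symm.injective ((prod_permuteWord h w).trans hfix)
  have hlist : w.toList.map (fun p => ⟨h • p.1, p.2⟩) = w.toList :=
    congrArg CoprodI.Word.toList hw
  cases hc : w.toList with
  | nil =>
    refine absurd ?_ hn
    change w.prod = 1
    simp [CoprodI.Word.prod, hc]
  | cons p l =>
    rw [hc, List.map_cons] at hlist
    exact ⟨p.1, congrArg Sigma.fst (List.cons.inj hlist).1⟩

end FreePower

namespace GraphProduct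

open Monoid

variable {V : Type} {Γ : SimpleGraph V} {Gv : V → Type} [∀ v, Group (Gv v)] {S T : Set V}

theorem of_mem_full {v : V} (hv : v ∈ S) (a : Gv v) : of Γ Gv v a ∈ full Γ Gv S :=
  Subgroup.mem_iSup_of_mem v (Subgroup.mem_iSup_of_mem hv ⟨a, rfl⟩)

theorem full_le {L : Subgroup (GraphProduct Γ Gv)} (h : ∀ v ∈ S, ∀ a, of Γ Gv v a ∈ L) :
    full Γ Gv S ≤ L :=
  iSup₂_le fun v hv => by
    rintro _ ⟨a, rfl⟩
    exact h v hv a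

theorem commute_of_mem_full {v : V} {x : GraphProduct Γ Gv}
    (hx : x ∈ full Γ Gv (Γ.neighborSet v)) (a : Gv v) : Commute x (of Γ Gv v a) := by
  have hle : full Γ Gv (Γ.neighborSet v) ≤ Subgroup.centralizer {of Γ Gv v a} :=
    full_le fun u hu b => Subgroup.mem_centralizer_singleton_iff.2 (commute_of hu.symm b a).eq
  exact Subgroup.mem_centralizer_singleton_iff.1 (hle hx)

open Classical in
theorem exists_retraction (Γ : SimpleGraph V) (Gv : V → Type) [∀ v, Group (Gv v)] (S : Set V) :
    ∃ r : GraphProduct Γ Gv →* GraphProduct Γ Gv, (∀ x ∈ full Γ Gv S, r x = x) ∧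
      ∀ T, Disjoint S T → ∀ x ∈ full Γ Gv T, r x = 1 := by
  let r : GraphProduct Γ Gv →* GraphProduct Γ Gv :=
    lift (fun v => if v ∈ S then of Γ Gv v else 1) fun u v huv a b => by
      split_ifs
      exacts [commute_of huv a b, .one_right _, .one_left _, .one_left _]
  refine ⟨r, fun x hx => ?_, fun T hST x hx => ?_⟩
  · have hle : full Γ Gv S ≤ r.eqLocus (.id _) := full_le fun v hv a => by
      change r _ = _
      simp [r, hv]
    exact hle hx
  · have hle : full Γ Gv T ≤ r.ker := full_le fun v hv a => by
      rw [MonoidHom.mem_ker, lift_of, if_neg (hST.notMem_of_mem_right hv), MonoidHom.one_apply]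
    exact hle hx

theorem eq_one_of_conj_mem_full (hST : Disjoint S T) {g x y : GraphProduct Γ Gv}
    (hx : x⁻¹ * (g * x) ∈ full Γ Gv S) (hy : y⁻¹ * (g * y) ∈ full Γ Gv T) : g = 1 := by
  obtain ⟨r, hS, hT⟩ := exists_retraction Γ Gv S
  have hg : r g = 1 := by simpa [inv_mul_eq_one] using hT T hST _ hy
  have h := hS _ hx
  rw [map_mul, map_mul, hg, one_mul, map_inv, inv_mul_cancel, eq_comm, inv_mul_eq_one] at h
  exact right_eq_mul.1 h

section NormalFreeProduct

/-- A free product of copies of `G_v`, indexed by the cosets `g G_lk(v)` and standing for the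
conjugates `g G_v g⁻¹`. -/
abbrev ConjCopies (Γ : SimpleGraph V) (Gv : V → Type) [∀ v, Group (Gv v)] (v : V) : Type :=
  CoprodI fun _ : GraphProduct Γ Gv ⧸ full Γ Gv (Γ.neighborSet v) => Gv v

/-- The inclusion of the copy of `G_v` standing for `g G_v g⁻¹`. -/
def conjCopy (v : V) (g : GraphProduct Γ Gv) : Gv v →* ConjCopies Γ Gv v :=
  CoprodI.of (M := fun _ : GraphProduct Γ Gv ⧸ full Γ Gv (Γ.neighborSet v) => Gv v) (i := g)

theorem conjCopy_injective (v : V) (g : GraphProduct Γ Gv) :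
    Function.Injective (conjCopy v g) :=
  CoprodI.of_injective _

theorem conjCopy_congr {v : V} {g h : GraphProduct Γ Gv}
    (hgh : g⁻¹ * h ∈ full Γ Gv (Γ.neighborSet v)) : conjCopy v g = conjCopy v h := by
  unfold conjCopy
  rw [QuotientGroup.eq.2 hgh]

/-- The action on the copies of `G_v` corresponding to conjugation. -/
abbrev translateCopies (Γ : SimpleGraph V) (Gv : V → Type) [∀ v, Group (Gv v)] (v : V) :
    GraphProduct Γ Gv →* MulAut (ConjCopies Γ Gv v) :=
  permuteFactors _ _ _

theorem translateCopies_conjCopy (v : V) (g h : GraphProduct Γ Gv) (a : Gv v) :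
    translateCopies Γ Gv v h (conjCopy v g a) = conjCopy v (h * g) a :=
  permuteFactors_of h _ a

variable (S) in
/-- The semidirect product, by the graph product, of a free product of groups standing for the
conjugates of the vertex groups in `S`. -/
abbrev ConjExtension (Γ : SimpleGraph V) (Gv : V → Type) [∀ v, Group (Gv v)] : Type :=
  CoprodI (fun v : S => ConjCopies Γ Gv v) ⋊[factorwiseAut fun v : S => translateCopies Γ Gv v]
    GraphProduct Γ Gv

variable (S) in
/-- The copy standing for `g G_v g⁻¹` is mapped to this conjugate. -/
noncomputable def evalCopies (Γ : SimpleGraph V) (Gv : V → Type) [∀ v, Group (Gv v)] :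
    CoprodI (fun v : S => ConjCopies Γ Gv v) →* GraphProduct Γ Gv :=
  CoprodI.lift fun v => CoprodI.lift fun c => (MulAut.conj c.out).toMonoidHom.comp (of Γ Gv v)

@[simp]
theorem evalCopies_of (v : S) (g : GraphProduct Γ Gv) (a : Gv v) :
    evalCopies S Γ Gv (CoprodI.of (conjCopy v.1 g a)) = g * of Γ Gv v a * g⁻¹ := by
  obtain ⟨l, hl⟩ := QuotientGroup.mk_out_eq_mul (full Γ Gv (Γ.neighborSet v.1)) g
  rw [evalCopies, CoprodI.lift_of, conjCopy, CoprodI.lift_of, MonoidHom.comp_apply,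
    MulEquiv.coe_toMonoidHom, MulAut.conj_apply, hl, mul_assoc g, (commute_of_mem_full l.2 a).eq]
  group

theorem evalCopies_comp_factorwiseAut (g : GraphProduct Γ Gv) :
    (evalCopies S Γ Gv).comp
        (factorwiseAut (fun v : S => translateCopies Γ Gv v) g).toMonoidHom =
      (MulAut.conj g).toMonoidHom.comp (evalCopies S Γ Gv) := by
  refine CoprodI.ext_hom _ _ fun v => CoprodI.ext_hom _ _ fun c => ?_
  obtain ⟨h, rfl⟩ := QuotientGroup.mk_surjective c
  ext a
  change evalCopies S Γ Gv (factorwiseAut (fun v : S => translateCopies Γ Gv v) g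
      (CoprodI.of (conjCopy v.1 h a))) =
    g * evalCopies S Γ Gv (CoprodI.of (conjCopy v.1 h a)) * g⁻¹
  rw [factorwiseAut_of, translateCopies_conjCopy, evalCopies_of, evalCopies_of]
  group

open Classical in
variable (S) in
/-- The vertex groups in `S` are sent to the copies they stand for, the others to the acting
group. -/
noncomputable def vertexEmbedding (Γ : SimpleGraph V) (Gv : V → Type) [∀ v, Group (Gv v)] (v : V) :
    Gv v →* ConjExtension S Γ Gv :=
  if hv : v ∈ S then
    SemidirectProduct.inl.comp ((CoprodI.of (i := (⟨v, hv⟩ : S))).comp (conjCopy v 1))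
  else SemidirectProduct.inr.comp (of Γ Gv v)

theorem vertexEmbedding_of_mem (v : S) (a : Gv v) :
    vertexEmbedding S Γ Gv v a = .inl (CoprodI.of (conjCopy v.1 1 a)) := by
  simp [vertexEmbedding]

theorem vertexEmbedding_of_notMem {v : V} (hv : v ∉ S) (a : Gv v) :
    vertexEmbedding S Γ Gv v a = .inr (of Γ Gv v a) := by
  simp [vertexEmbedding, hv]

theorem commute_vertexEmbedding (hS : Γ.IsIndepSet S) {u v : V} (huv : Γ.Adj u v) (a : Gv u)
    (b : Gv v) : Commute (vertexEmbedding S Γ Gv u a) (vertexEmbedding S Γ Gv v b) := by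
  have commute_of_mem (u : S) {v : V} (hv : v ∉ S) (huv : Γ.Adj u v) (a : Gv u) (b : Gv v) :
      Commute (vertexEmbedding S Γ Gv v b) (vertexEmbedding S Γ Gv u a) := by
    rw [vertexEmbedding_of_mem, vertexEmbedding_of_notMem hv, Commute, SemiconjBy,
      ← mul_inv_eq_iff_eq_mul, ← map_inv, ← SemidirectProduct.inl_aut, factorwiseAut_of,
      translateCopies_conjCopy, conjCopy_congr]
    simpa using of_mem_full (S := Γ.neighborSet u) huv b
  by_cases hu : u ∈ S
  · exact (commute_of_mem ⟨u, hu⟩ (fun hv => hS hu hv huv.ne huv) huv a b).symm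
  by_cases hv : v ∈ S
  · exact commute_of_mem ⟨v, hv⟩ hu huv.symm b a
  · rw [vertexEmbedding_of_notMem hu, vertexEmbedding_of_notMem hv]
    exact (commute_of huv a b).map _

/-- The embedding is split by the evaluation of the copies. -/
theorem exists_embedding_conjExtension (hS : Γ.IsIndepSet S) :
    ∃ φ : GraphProduct Γ Gv →* ConjExtension S Γ Gv, Function.Injective φ ∧
      ∀ (v : S) a, φ (of Γ Gv v a) = .inl (CoprodI.of (conjCopy v.1 1 a)) := by
  let φ := lift (vertexEmbedding S Γ Gv) fun u v => commute_vertexEmbedding hS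
  let ψ : ConjExtension S Γ Gv →* GraphProduct Γ Gv :=
    SemidirectProduct.lift (evalCopies S Γ Gv) (.id _) evalCopies_comp_factorwiseAut
  refine ⟨φ, Function.LeftInverse.injective (g := ψ) fun x => ?_,
    fun v a => (lift_of _ _ _ _).trans (vertexEmbedding_of_mem v a)⟩
  induction x using induction_on with
  | one => simp
  | mul x y hx hy => rw [map_mul, map_mul, hx, hy]
  | of v a =>
    rw [lift_of]
    by_cases hv : v ∈ S
    · rw [vertexEmbedding_of_mem ⟨v, hv⟩, SemidirectProduct.lift_inl, evalCopies_of]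
      simp
    · rw [vertexEmbedding_of_notMem hv, SemidirectProduct.lift_inr, MonoidHom.id_apply]

theorem exists_conj_mem_full_of_translateCopies_eq {v : V} {g : GraphProduct Γ Gv}
    {n : ConjCopies Γ Gv v} (hn : n ≠ 1) (hg : translateCopies Γ Gv v g n = n) :
    ∃ x, x⁻¹ * (g * x) ∈ full Γ Gv (Γ.neighborSet v) := by
  obtain ⟨c, hc⟩ := exists_smul_eq_of_permuteFactors_eq hn hg
  obtain ⟨x, rfl⟩ := QuotientGroup.mk_surjective c
  exact ⟨x, QuotientGroup.eq.1 hc.symm⟩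

end NormalFreeProduct

theorem acylindricallyArboreal_of_isIndepSet [∀ v, Infinite (Gv v)] (hS : Γ.IsIndepSet S)
    (hnontrivial : S.Nontrivial) (hlinks : S.PairwiseDisjoint Γ.neighborSet) :
    AcylindricallyArboreal (GraphProduct Γ Gv) := by
  obtain ⟨u, hu, v, hv, huv⟩ := hnontrivial
  have : Nontrivial V := ⟨u, v, huv⟩
  obtain ⟨φ, hφ, hφ_of⟩ := exists_embedding_conjExtension (Gv := Gv) hS
  obtain ⟨a, ha⟩ := exists_ne (1 : Gv u)
  obtain ⟨b, hb⟩ := exists_ne (1 : Gv v)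
  refine FactorwiseAction.acylindricallyArboreal not_isVirtuallyCyclic hφ ?_
    (i := ⟨u, hu⟩) (j := ⟨v, hv⟩) (by simpa using huv)
    ((map_ne_one_iff _ (conjCopy_injective u 1)).2 ha)
    ((map_ne_one_iff _ (conjCopy_injective v 1)).2 hb) (hφ_of ⟨u, hu⟩ a) (hφ_of ⟨v, hv⟩ b)
  intro g w w' hww' n hn m hm hgn hgm
  obtain ⟨x, hx⟩ := exists_conj_mem_full_of_translateCopies_eq hn hgn
  obtain ⟨y, hy⟩ := exists_conj_mem_full_of_translateCopies_eq hm hgm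
  exact eq_one_of_conj_mem_full
    (hlinks w.2 w'.2 (Subtype.coe_injective.ne hww')) hx hy

theorem acylindricallyArboreal_of_diamAtLeast_three [∀ v, Infinite (Gv v)]
    (h : Γ.diamAtLeast 3) : AcylindricallyArboreal (GraphProduct Γ Gv) := by
  obtain ⟨u, v, huv, hdist⟩ := h
  have le_length (p : Γ.Walk u v) : 3 ≤ p.length :=
    hdist.elim (fun h => absurd p.reachable h) fun h => h.trans (SimpleGraph.dist_le p)
  have hadj : ¬ Γ.Adj u v := fun h => by
    have := le_length (.cons h .nil)
    simp at this
  have hlinks : Disjoint (Γ.neighborSet u) (Γ.neighborSet v) :=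
    Set.disjoint_left.2 fun w (hu : Γ.Adj u w) (hv : Γ.Adj v w) => by
      have := le_length (.cons hu (.cons hv.symm .nil))
      simp at this
  exact acylindricallyArboreal_of_isIndepSet (S := {u, v})
    (Set.pairwise_pair.2 fun _ => ⟨hadj, fun h => hadj h.symm⟩) (Set.nontrivial_pair huv)
    (Set.pairwise_pair.2 fun _ => ⟨hlinks, hlinks.symm⟩)

end GraphProduct

theorem graphProduct_infinite_vertexGroups_acylindricallyArboreal_iff_general {V : Type}
    [Nontrivial V] (Γ : SimpleGraph V) (Gv : V → Type) [∀ v, Group (Gv v)]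
    [∀ v, Infinite (Gv v)] :
    AcylindricallyArboreal (GraphProduct Γ Gv) ↔ Γ.diamAtLeast 3 :=
  ⟨GraphProduct.diamAtLeast_three_of_acylindricallyArboreal,
    GraphProduct.acylindricallyArboreal_of_diamAtLeast_three⟩

/-- A non-degenerate graph product over a finite simple graph all of whose vertex
groups are infinite is acylindrically arboreal if and only if `diam(Γ) ≥ 3`. -/
theorem graphProduct_infinite_vertexGroups_acylindricallyArboreal_iff {V : Type}
    [Fintype V] (Γ : SimpleGraph V) (Gv : V → Type) [∀ v, Group (Gv v)]
    (hnd : GraphProduct.NonDegenerate Gv) (hinf : ∀ v, Infinite (Gv v)) :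
    AcylindricallyArboreal (GraphProduct Γ Gv) ↔ Γ.diamAtLeast 3 :=
  have := hnd.2
  graphProduct_infinite_vertexGroups_acylindricallyArboreal_iff_general Γ Gv
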